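/- arXiv:2503.18518 — 3 statements merged into one kernel-verified Lean document; each statement's English description precedes it below -/
import Mathlib

section
/- Let μ be a permuton that is absolutely continuous with respect to two-dimensional Lebesgue measure on [0,1]². Then lim_{n→∞} H_n(μ)/(n·log n) = 1. -/
open MeasureTheory Filter

/-- The probability that `n` i.i.d. points sampled from `μ` realize the pattern `π`. -/
noncomputable def patternProb {n : ℕ} (μ : Measure (ℝ × ℝ)) (π : Equiv.Perm (Fin n)) : ℝ :=
  (n.factorial : ℝ) *
    ((Measure.pi fun _ : Fin n => μ)
      {p : Fin n → ℝ × ℝ | ∀ i j : Fin n, i < j →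
        (p i).1 < (p j).1 ∧ ((p i).2 < (p j).2 ↔ π i < π j)}).toReal

/-- Sampling entropy `H_n(μ)`. -/
noncomputable def samplingEntropy (μ : Measure (ℝ × ℝ)) (n : ℕ) : ℝ :=
  ∑ π : Equiv.Perm (Fin n), Real.negMulLog (patternProb μ π)

/-- A pre-permuton: a Borel probability measure on `ℝ²` with atomless marginals. -/
def IsPrePermuton (μ : Measure (ℝ × ℝ)) : Prop :=
  IsProbabilityMeasure μ ∧ (∀ x : ℝ, μ.map Prod.fst {x} = 0) ∧ ∀ y : ℝ, μ.map Prod.snd {y} = 0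

/-- A permuton: a Borel probability measure on `[0,1]²` with uniform marginals. -/
def IsPermuton (μ : Measure (ℝ × ℝ)) : Prop :=
  μ (Set.Icc (0:ℝ) 1 ×ˢ Set.Icc (0:ℝ) 1)ᶜ = 0 ∧
  μ.map Prod.fst = volume.restrict (Set.Icc (0:ℝ) 1) ∧
  μ.map Prod.snd = volume.restrict (Set.Icc (0:ℝ) 1)

open scoped ENNReal NNReal

lemma pi_le_smul_aux {n : ℕ} {α : Type*} [MeasurableSpace α] (ν ρ : Fin n → Measure α)
    [∀ i, IsFiniteMeasure (ν i)] [∀ i, IsFiniteMeasure (ρ i)] (M : ℝ≥0) (hM : M ≠ 0)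
    (h : ∀ i, ν i ≤ M • ρ i) (s : Set (Fin n → α)) :
    Measure.pi ν s ≤ (M : ℝ≥0∞) ^ n * Measure.pi ρ s := by
  have key : ((M : ℝ≥0) ^ n)⁻¹ • Measure.pi ν ≤ Measure.pi ρ := by
    refine Measure.le_iff.2 fun s hs => ?_
    rw [Measure.pi_def ρ, toMeasure_apply _ _ hs]
    suffices (((M : ℝ≥0) ^ n)⁻¹ • Measure.pi ν).toOuterMeasure ≤
      OuterMeasure.pi fun i => (ρ i).toOuterMeasure from this s
    rw [OuterMeasure.le_pi]
    intro s _
    show (((M : ℝ≥0) ^ n)⁻¹ • Measure.pi ν) _ ≤ _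
    rw [Measure.smul_apply, Measure.pi_pi]
    have h1 : ∏ i, ν i (s i) ≤ ∏ i, ((M : ℝ≥0∞) * ρ i (s i)) := by
      refine Finset.prod_le_prod' fun i _ => ?_
      have := h i (s i)
      rwa [Measure.smul_apply, ENNReal.smul_def, smul_eq_mul] at this
    rw [Finset.prod_mul_distrib, Finset.prod_const, Finset.card_univ, Fintype.card_fin] at h1
    rw [ENNReal.smul_def, smul_eq_mul, ENNReal.coe_inv (pow_ne_zero _ hM), ENNReal.coe_pow]
    rw [ENNReal.inv_mul_le_iff]
    · exact h1
    · exact pow_ne_zero _ (by simpa using hM)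
    · exact ENNReal.pow_ne_top ENNReal.coe_ne_top
  have := key s
  rw [Measure.smul_apply, ENNReal.smul_def, smul_eq_mul, ENNReal.coe_inv (pow_ne_zero _ hM),
    ENNReal.coe_pow, ENNReal.inv_mul_le_iff] at this
  · exact this
  · exact pow_ne_zero _ (by simpa using hM)
  · exact ENNReal.pow_ne_top ENNReal.coe_ne_top

lemma perm_mp_aux {n : ℕ} {α : Type*} [MeasurableSpace α] (μ : Measure α) [IsFiniteMeasure μ]
    (σ : Equiv.Perm (Fin n)) :
    MeasurePreserving (fun p : Fin n → α => p ∘ σ) (Measure.pi fun _ => μ)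
      (Measure.pi fun _ => μ) := by
  have hm : Measurable (fun p : Fin n → α => p ∘ σ) := by
    rw [measurable_pi_iff]; intro i; exact measurable_pi_apply _
  refine ⟨hm, (Measure.pi_eq fun s hs => ?_).symm⟩
  rw [Measure.map_apply hm (MeasurableSet.univ_pi hs)]
  have : (fun p : Fin n → α => p ∘ σ) ⁻¹' (Set.univ.pi s) = Set.univ.pi (fun i => s (σ.symm i)) := by
    ext p
    simp only [Set.mem_preimage, Set.mem_univ_pi, Function.comp]
    refine ⟨fun h i => by simpa using h (σ.symm i), fun h i => by simpa using h (σ i)⟩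
  rw [this, Measure.pi_pi]
  exact Equiv.prod_comp σ.symm (fun i => μ (s i))

lemma strictMono_perm_unique_aux {k : ℕ} {x : Fin k → ℝ} {σ τ : Equiv.Perm (Fin k)}
    (h1 : StrictMono (x ∘ σ)) (h2 : StrictMono (x ∘ τ)) : σ = τ := by
  have hr : Set.range (x ∘ σ) = Set.range (x ∘ τ) := by
    rw [σ.surjective.range_comp, τ.surjective.range_comp]
  have := (StrictMono.range_inj h1 h2).1 hr
  have hx : Function.Injective x := by
    have h3 := h1.injective.comp σ.symm.injective
    rwa [Function.comp_assoc, Equiv.self_comp_symm, Function.comp_id] at h3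
  ext i
  exact congrArg _ (hx (congrFun this i))

lemma measurableSet_strictMono_aux {k : ℕ} : MeasurableSet {y : Fin k → ℝ | StrictMono y} := by
  simp only [StrictMono, Set.ofPred_forall]
  refine MeasurableSet.iInter fun i => MeasurableSet.iInter fun j => MeasurableSet.iInter fun _ => ?_
  exact measurableSet_lt (measurable_pi_apply i) (measurable_pi_apply j)

lemma strictMono_bound_aux {k n : ℕ} (lam : Measure ℝ) [IsProbabilityMeasure lam]
    (e : Fin k ↪ Fin n) :
    (k.factorial : ℝ≥0∞) * (Measure.pi fun _ : Fin n => lam) {y | StrictMono (y ∘ e)} ≤ 1 := by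
  set P := Measure.pi fun _ : Fin n => lam
  have hme : Measurable (fun y : Fin n → ℝ => y ∘ e) := by
    rw [measurable_pi_iff]; intro i; exact measurable_pi_apply _
  let A : Equiv.Perm (Fin k) → Set (Fin n → ℝ) := fun τ => {y | StrictMono ((y ∘ e) ∘ τ)}
  have hA : ∀ τ, MeasurableSet (A τ) := fun τ =>
    ((perm_mp_aux (volume.restrict (Set.Icc (0:ℝ) 1)) τ).measurable.comp hme)
      measurableSet_strictMono_aux
  have hd : Pairwise (Function.onFun Disjoint A) := by
    intro σ τ hne
    rw [Function.onFun, Set.disjoint_left]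
    intro y h1 h2
    exact hne (strictMono_perm_unique_aux h1 h2)
  have heq : ∀ τ, P (A τ) = P {y | StrictMono (y ∘ e)} := by
    intro τ
    have h1 := (perm_mp_aux lam (τ.viaFintypeEmbedding e)).measure_preimage
      (hme measurableSet_strictMono_aux).nullMeasurableSet
    refine Eq.trans ?_ h1
    congr 1
    ext y
    simp only [A, Set.mem_preimage, Set.mem_ofPred_eq]
    have : (y ∘ (τ.viaFintypeEmbedding e)) ∘ e = (y ∘ e) ∘ τ := by
      ext i; simp [Equiv.Perm.viaFintypeEmbedding_apply_image]
    rw [this]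
  have h2 := measure_iUnion (μ := P) hd hA
  rw [tsum_fintype] at h2
  simp only [heq, Finset.sum_const, Finset.card_univ, Fintype.card_perm, Fintype.card_fin,
    nsmul_eq_mul] at h2
  rw [← h2]
  exact prob_le_one

/-- pattern cell -/
def patCell {n : ℕ} (π : Equiv.Perm (Fin n)) : Set (Fin n → ℝ × ℝ) :=
  {p | StrictMono (fun i => (p i).1) ∧ StrictMono (fun i => (p (π.symm i)).2)}

lemma measurableSet_patCell {n : ℕ} (π : Equiv.Perm (Fin n)) : MeasurableSet (patCell π) := by
  refine MeasurableSet.inter ?_ ?_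
  · refine (show Measurable fun p : Fin n → ℝ × ℝ => fun i => (p i).1 from ?_)
      measurableSet_strictMono_aux
    fun_prop
  · refine (show Measurable fun p : Fin n → ℝ × ℝ => fun i => (p (π.symm i)).2 from ?_)
      measurableSet_strictMono_aux
    fun_prop

lemma pi_inj_aux {n : ℕ} : ∀ᵐ y ∂(Measure.pi fun _ : Fin n => volume.restrict (Set.Icc (0:ℝ) 1)),
    Function.Injective y := by
  have h : ∀ i j : Fin n, i ≠ j →
      ∀ᵐ y ∂(Measure.pi fun _ : Fin n => volume.restrict (Set.Icc (0:ℝ) 1)), y i ≠ y j := by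
    intro i j hij
    rw [← Measure.restrict_pi_pi]
    refine ae_restrict_of_ae ?_
    rw [ae_iff]
    let L : (Fin n → ℝ) →ₗ[ℝ] ℝ := LinearMap.proj (R := ℝ) (φ := fun _ => ℝ) i - LinearMap.proj (R := ℝ) (φ := fun _ => ℝ) j
    have h1 : {a : Fin n → ℝ | ¬ a i ≠ a j} = (LinearMap.ker L : Set (Fin n → ℝ)) := by
      ext a; simp [L, sub_eq_zero]
    rw [h1]
    refine Measure.addHaar_submodule (volume : Measure (Fin n → ℝ)) _ ?_
    intro htop
    have : Pi.single i (1:ℝ) ∈ LinearMap.ker L := by rw [htop]; trivial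
    simp [L, hij.symm] at this
  have h2 : ∀ᵐ y ∂(Measure.pi fun _ : Fin n => volume.restrict (Set.Icc (0:ℝ) 1)),
      ∀ i j : Fin n, i ≠ j → y i ≠ y j := by
    rw [ae_all_iff]; intro i; rw [ae_all_iff]; intro j
    by_cases hij : i = j
    · simp [hij]
    · filter_upwards [h i j hij] with y hy _ using hy
  filter_upwards [h2] with y hy i j hij
  by_contra hne
  exact hy i j hne hij

lemma permuton_prob {μ : Measure (ℝ × ℝ)} (hμ : IsPermuton μ) : IsProbabilityMeasure μ := by
  constructor
  have := congrArg (fun m => m Set.univ) hμ.2.1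
  simpa [Measure.map_apply measurable_fst MeasurableSet.univ] using this

lemma pi_inj_permuton {n : ℕ} {μ : Measure (ℝ × ℝ)} (hμ : IsPermuton μ) :
    ∀ᵐ p ∂(Measure.pi fun _ : Fin n => μ),
      Function.Injective (fun i => (p i).1) ∧ Function.Injective (fun i => (p i).2) := by
  have := permuton_prob hμ
  have h1 : Measure.map (fun p : Fin n → ℝ × ℝ => fun i => (p i).1) (Measure.pi fun _ : Fin n => μ)
      = (Measure.pi fun _ : Fin n => volume.restrict (Set.Icc (0:ℝ) 1)) := by
    rw [← hμ.2.1]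
    have : SigmaFinite (μ.map Prod.fst) := by rw [hμ.2.1]; infer_instance
    exact Measure.pi_map_pi (f := fun _ => Prod.fst) (fun _ => measurable_fst.aemeasurable)
  have h2 : Measure.map (fun p : Fin n → ℝ × ℝ => fun i => (p i).2) (Measure.pi fun _ : Fin n => μ)
      = (Measure.pi fun _ : Fin n => volume.restrict (Set.Icc (0:ℝ) 1)) := by
    rw [← hμ.2.2]
    have : SigmaFinite (μ.map Prod.snd) := by rw [hμ.2.2]; infer_instance
    exact Measure.pi_map_pi (f := fun _ => Prod.snd) (fun _ => measurable_snd.aemeasurable)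
  have e1 := ae_of_ae_map (measurable_pi_lambda _ fun i => measurable_fst.comp (measurable_pi_apply i)).aemeasurable (h1 ▸ pi_inj_aux (n := n))
  have e2 := ae_of_ae_map (measurable_pi_lambda _ fun i => measurable_snd.comp (measurable_pi_apply i)).aemeasurable (h2 ▸ pi_inj_aux (n := n))
  filter_upwards [e1, e2] with p a b using ⟨a, b⟩

lemma patternProb_eq {n : ℕ} {μ : Measure (ℝ × ℝ)} (hμ : IsPermuton μ) (π : Equiv.Perm (Fin n)) :
    patternProb μ π = n.factorial * ((Measure.pi fun _ : Fin n => μ) (patCell π)).toReal := by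
  unfold patternProb
  congr 2
  refine measure_congr ?_
  filter_upwards [pi_inj_permuton (n := n) hμ] with p hp
  refine propext ?_
  show (∀ i j : Fin n, i < j →
        (p i).1 < (p j).1 ∧ ((p i).2 < (p j).2 ↔ π i < π j)) ↔ _ ∧ _
  constructor
  · intro h
    refine ⟨fun i j hij => (h i j hij).1, fun i j hij => ?_⟩
    rcases lt_trichotomy (π.symm i) (π.symm j) with h1 | h1 | h1
    · exact (h _ _ h1).2.2 (by simpa using hij)
    · exact absurd (π.symm.injective h1) hij.ne
    · have h2 := (h _ _ h1).2
      simp only [Equiv.apply_symm_apply] at h2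
      have h3 : ¬ (p (π.symm j)).2 < (p (π.symm i)).2 := fun h4 => absurd (h2.1 h4) hij.asymm
      refine lt_of_le_of_ne (not_lt.1 h3) fun h4 => ?_
      exact h1.ne' (hp.2 h4)
  · rintro ⟨h1, h2⟩ i j hij
    refine ⟨h1 hij, ?_⟩
    have := h2.lt_iff_lt (a := π i) (b := π j)
    simpa using this

lemma exists_sort_aux {n : ℕ} {x : Fin n → ℝ} (hx : Function.Injective x) :
    ∃ σ : Equiv.Perm (Fin n), StrictMono (x ∘ σ) :=
  ⟨Tuple.sort x, (Tuple.monotone_sort x).strictMono_of_injective (hx.comp (Equiv.injective _))⟩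

lemma sum_lintegral_cells {n : ℕ} {μ : Measure (ℝ × ℝ)} (hμ : IsPermuton μ)
    (N : (Fin n → ℝ × ℝ) → ℝ≥0∞) 
    (hinv : ∀ (σ : Equiv.Perm (Fin n)) p, N (p ∘ σ) = N p) :
    ∑ π : Equiv.Perm (Fin n), (n.factorial : ℝ≥0∞) *
      ∫⁻ p in patCell π, N p ∂(Measure.pi fun _ : Fin n => μ)
      = ∫⁻ p, N p ∂(Measure.pi fun _ : Fin n => μ) := by
  have := permuton_prob hμ
  set P := Measure.pi fun _ : Fin n => μ with hP
  let A : Equiv.Perm (Fin n) × Equiv.Perm (Fin n) → Set (Fin n → ℝ × ℝ) :=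
    fun q => (fun p : Fin n → ℝ × ℝ => p ∘ q.1) ⁻¹' patCell q.2
  have hA : ∀ q, MeasurableSet (A q) := fun q =>
    (perm_mp_aux μ q.1).measurable (measurableSet_patCell q.2)
  have hd : Pairwise (Function.onFun Disjoint A) := by
    rintro ⟨σ, π⟩ ⟨σ', π'⟩ hne
    rw [Function.onFun, Set.disjoint_left]
    rintro p ⟨h1, h2⟩ ⟨h3, h4⟩
    have hs : σ = σ' := strictMono_perm_unique_aux (x := fun i => (p i).1) h1 h3
    subst hs
    have hs : π.symm = π'.symm :=
      strictMono_perm_unique_aux (x := fun i => (p (σ i)).2) h2 h4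
    have hs' : π = π' := by
      rw [← Equiv.symm_symm π, hs, Equiv.symm_symm]
    exact hne (by rw [hs'])
  have hU : (⋃ q, A q) =ᵐ[P] Set.univ := by
    rw [eventuallyEq_univ]
    filter_upwards [pi_inj_permuton (n := n) hμ] with p hp
    obtain ⟨σ, hσ⟩ := exists_sort_aux hp.1
    obtain ⟨τ, hτ⟩ := exists_sort_aux (hp.2.comp σ.injective)
    exact Set.mem_iUnion.2 ⟨(σ, τ.symm), hσ, hτ⟩
  have h1 : ∀ q, ∫⁻ p in A q, N p ∂P = ∫⁻ p in patCell q.2, N p ∂P := by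
    intro q
    let E : (Fin n → ℝ × ℝ) ≃ᵐ (Fin n → ℝ × ℝ) :=
      { toFun := fun p => p ∘ q.1
        invFun := fun p => p ∘ q.1.symm
        left_inv := fun p => by ext i <;> simp
        right_inv := fun p => by ext i <;> simp
        measurable_toFun := (perm_mp_aux μ q.1).measurable
        measurable_invFun := (perm_mp_aux μ q.1.symm).measurable }
    have := (perm_mp_aux μ q.1).setLIntegral_comp_preimage_emb E.measurableEmbedding N (patCell q.2)
    rw [← this]
    simp only [hinv]
    rfl
  rw [← setLIntegral_univ (μ := P), ← setLIntegral_congr hU, lintegral_iUnion hA hd, tsum_fintype]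
  simp only [h1]
  rw [Fintype.sum_prod_type]
  simp [Fintype.card_perm, Finset.mul_sum]

lemma prod_cell_bound {k n : ℕ} (lam : Measure ℝ) [IsProbabilityMeasure lam]
    (e : Fin k ↪ Fin n) :
    (n.factorial : ℝ≥0∞) * (Measure.pi fun _ : Fin n => lam.prod lam)
      {p | StrictMono (fun i => (p i).1) ∧ StrictMono (fun i => (p (e i)).2)} * k.factorial ≤ 1 := by
  have h := (measurePreserving_arrowProdEquivProdArrow ℝ ℝ (Fin n) (fun _ => lam)
    (fun _ => lam)).measure_preimage_equiv
      ({x : Fin n → ℝ | StrictMono (x ∘ (Function.Embedding.refl (Fin n)))} ×ˢ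
        {y : Fin n → ℝ | StrictMono (y ∘ e)})
  have h' : (MeasurableEquiv.arrowProdEquivProdArrow ℝ ℝ (Fin n)) ⁻¹'
      ({x : Fin n → ℝ | StrictMono (x ∘ (Function.Embedding.refl (Fin n)))} ×ˢ
        {y : Fin n → ℝ | StrictMono (y ∘ e)}) =
      {p | StrictMono (fun i => (p i).1) ∧ StrictMono (fun i => (p (e i)).2)} := rfl
  rw [h', Measure.prod_prod] at h
  rw [h]
  have h1 := strictMono_bound_aux lam (Function.Embedding.refl (Fin n))
  have h2 := strictMono_bound_aux lam e
  calc _ = _ * _ := by ring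
    _ ≤ 1 * 1 := mul_le_mul' h1 h2
    _ = 1 := one_mul 1

/-- Configurations whose set of good indices is exactly `S`. -/
def goodCell {n : ℕ} (G : Set (ℝ × ℝ)) (S : Finset (Fin n)) : Set (Fin n → ℝ × ℝ) :=
  {p | ∀ i, p i ∈ G ↔ i ∈ S}

open Classical in
lemma cell_bound {n : ℕ} {μ : Measure (ℝ × ℝ)} (hμ : IsPermuton μ) {G : Set (ℝ × ℝ)}
    (M : ℝ≥0) (hM : 1 ≤ M)
    (hMG : μ.restrict G ≤
      M • ((volume.restrict (Set.Icc (0:ℝ) 1)).prod (volume.restrict (Set.Icc (0:ℝ) 1))))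
    (π : Equiv.Perm (Fin n)) (S : Finset (Fin n)) :
    (n.factorial : ℝ≥0∞) * (Measure.pi fun _ : Fin n => μ) (patCell π ∩ goodCell G S)
      * (S.card).factorial ≤ (M : ℝ≥0∞) ^ n := by
  have := permuton_prob hμ
  set lam : Measure ℝ := volume.restrict (Set.Icc (0:ℝ) 1) with hlam
  have hlp : IsProbabilityMeasure lam := ⟨by simp [hlam]⟩
  let D : Fin n → Set (ℝ × ℝ) := fun i => if i ∈ S then G else Gᶜ
  let T : Fin n → ℝ × ℝ → ℝ × ℝ := fun i => if i ∈ S then id else fun q => (q.1, 0)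
  have hT : ∀ i, Measurable (T i) := by
    intro i
    by_cases h : i ∈ S
    · simp only [T, h, if_true]; exact measurable_id
    · simp only [T, h, if_false]; fun_prop
  have hGS : goodCell G S = Set.univ.pi D := by
    ext p
    rw [Set.mem_univ_pi]
    refine forall_congr' fun i => ?_
    by_cases h : i ∈ S <;> simp [D, h]
  let o := (S.map π.toEmbedding).orderEmbOfFin (Finset.card_map _)
  let e : Fin S.card ↪ Fin n := o.toEmbedding.trans π.symm.toEmbedding
  have heS : ∀ i, e i ∈ S := by
    intro i
    have h := (S.map π.toEmbedding).orderEmbOfFin_mem (Finset.card_map _) i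
    rw [Finset.mem_map_equiv] at h
    exact h
  let F : Set (Fin n → ℝ × ℝ) :=
    {p | StrictMono (fun i => (p i).1) ∧ StrictMono (fun i => (p (e i)).2)}
  have hF : MeasurableSet F := by
    refine MeasurableSet.inter ?_ ?_
    · refine (show Measurable fun p : Fin n → ℝ × ℝ => fun i => (p i).1 from ?_)
        measurableSet_strictMono_aux
      fun_prop
    · refine (show Measurable fun p : Fin n → ℝ × ℝ => fun i => (p (e i)).2 from ?_)
        measurableSet_strictMono_aux
      fun_prop
  have hsub : patCell π ⊆ F := by
    rintro p ⟨h1, h2⟩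
    exact ⟨h1, fun i j hij => h2 (o.strictMono hij)⟩
  let TT : (Fin n → ℝ × ℝ) → (Fin n → ℝ × ℝ) := fun p i => T i (p i)
  have hTT : Measurable TT :=
    measurable_pi_lambda _ fun i => (hT i).comp (measurable_pi_apply i)
  have hTF : TT ⁻¹' F = F := by
    have a1 : ∀ p i, (TT p i).1 = (p i).1 := by
      intro p i
      by_cases h : i ∈ S <;> simp [TT, T, h]
    have a2 : ∀ p i, (TT p (e i)).2 = (p (e i)).2 := by
      intro p i
      simp [TT, T, heS i]
    ext p
    simp only [F, Set.mem_preimage, Set.mem_ofPred_eq, a1, a2]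
  have hle : ∀ i, (μ.restrict (D i)).map (T i) ≤ M • (lam.prod lam).map (T i) := by
    intro i
    by_cases h : i ∈ S
    · simp only [D, T, h, if_true, Measure.map_id]
      exact hMG
    · simp only [D, T, h, if_false]
      have b : (fun q : ℝ × ℝ => (q.1, (0:ℝ))) = (fun x : ℝ => (x, (0:ℝ))) ∘ Prod.fst := rfl
      have bm : Measurable (fun x : ℝ => (x, (0:ℝ))) := by fun_prop
      rw [b, ← Measure.map_map bm measurable_fst, ← Measure.map_map bm measurable_fst]
      have c1 : (lam.prod lam).map Prod.fst = lam := by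
        simp
      rw [c1]
      have c2 : (μ.restrict Gᶜ).map Prod.fst ≤ lam := by
        rw [hlam, ← hμ.2.1]
        exact Measure.map_mono Measure.restrict_le_self measurable_fst
      refine (Measure.map_mono c2 bm).trans ?_
      refine Measure.le_iff.2 fun s hs => ?_
      rw [Measure.smul_apply, ENNReal.smul_def, smul_eq_mul]
      calc _ = 1 * (lam.map fun x : ℝ => (x, (0:ℝ))) s := (one_mul _).symm
        _ ≤ _ := by gcongr; exact_mod_cast hM
  have fin2 : ∀ i, IsFiniteMeasure ((lam.prod lam).map (T i)) := fun i => inferInstance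
  have fin1 : ∀ i, IsFiniteMeasure ((μ.restrict (D i)).map (T i)) := fun i => inferInstance
  have main : (Measure.pi fun _ : Fin n => μ) (patCell π ∩ goodCell G S) ≤
      (M : ℝ≥0∞) ^ n * (Measure.pi fun _ : Fin n => lam.prod lam) F := by
    calc _ ≤ (Measure.pi fun _ : Fin n => μ) (F ∩ Set.univ.pi D) := by
            rw [hGS]; exact measure_mono (Set.inter_subset_inter_left _ hsub)
      _ = (Measure.pi fun i : Fin n => μ.restrict (D i)) F := by
            rw [← Measure.restrict_pi_pi, Measure.restrict_apply hF]
      _ = (Measure.pi fun i : Fin n => (μ.restrict (D i)).map (T i)) F := by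
            rw [← Measure.pi_map_pi (fun i => (hT i).aemeasurable)]
            rw [Measure.map_apply hTT hF, hTF]
      _ ≤ (M : ℝ≥0∞) ^ n * (Measure.pi fun i : Fin n => (lam.prod lam).map (T i)) F :=
            pi_le_smul_aux _ _ M (by positivity) hle F
      _ = _ := by
            rw [← Measure.pi_map_pi (fun i => (hT i).aemeasurable)]
            rw [Measure.map_apply hTT hF, hTF]
  have hb := prod_cell_bound lam e
  calc _ ≤ (n.factorial : ℝ≥0∞) * ((M : ℝ≥0∞) ^ n * (Measure.pi fun _ : Fin n => lam.prod lam) F)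
        * (S.card).factorial := by gcongr
    _ = (M : ℝ≥0∞) ^ n * ((n.factorial : ℝ≥0∞) * (Measure.pi fun _ : Fin n => lam.prod lam) F
        * (S.card).factorial) := by ring
    _ ≤ (M : ℝ≥0∞) ^ n * 1 := by gcongr
    _ = _ := mul_one _

open Classical in
lemma lintegral_cell_split {n : ℕ} (P : Measure (Fin n → ℝ × ℝ)) {G : Set (ℝ × ℝ)}
    (hG : MeasurableSet G) (c : Finset (Fin n) → ℝ≥0∞) (E : Set (Fin n → ℝ × ℝ))
    (hE : MeasurableSet E) :
    ∫⁻ p in E, c (Finset.univ.filter fun i => p i ∈ G) ∂P = ∑ S, P (E ∩ goodCell G S) * c S := by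
  have hm : ∀ S : Finset (Fin n), MeasurableSet (goodCell G S) := by
    intro S
    simp only [goodCell, Set.ofPred_forall]
    refine MeasurableSet.iInter fun i => ?_
    by_cases h : i ∈ S
    · have := (measurable_pi_apply (X := fun _ : Fin n => ℝ × ℝ) i) hG
      simp only [h, iff_true]
      exact this
    · have := (measurable_pi_apply (X := fun _ : Fin n => ℝ × ℝ) i) hG.compl
      simp only [h, iff_false]
      exact this
  have hmem : ∀ (p : Fin n → ℝ × ℝ) (S : Finset (Fin n)), p ∈ goodCell G S ↔ (Finset.univ.filter fun i => p i ∈ G) = S := by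
    intro p S
    simp [goodCell, Finset.ext_iff]
  have hU : E = ⋃ S, E ∩ goodCell G S := by
    rw [← Set.inter_iUnion]
    refine (Set.inter_eq_left.2 fun p _ => Set.mem_iUnion.2 ⟨_, (hmem p _).2 rfl⟩).symm
  have hd : Pairwise (Function.onFun Disjoint fun S => E ∩ goodCell G S) := by
    intro S S' hne
    rw [Function.onFun, Set.disjoint_left]
    rintro p ⟨_, h1⟩ ⟨_, h2⟩
    rw [hmem] at h1 h2
    exact hne (h1.symm.trans h2)
  conv_lhs => rw [hU]
  rw [lintegral_iUnion (fun S => hE.inter (hm S)) hd, tsum_fintype]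
  refine Finset.sum_congr rfl fun S _ => ?_
  rw [setLIntegral_congr_fun (g := fun _ => c S) (hE.inter (hm S))
    (fun p hp => by simp only [(hmem p S).1 hp.2])]
  rw [setLIntegral_const, mul_comm]

open Classical in
lemma sum_cells_card {n : ℕ} {μ : Measure (ℝ × ℝ)} (hμ : IsPermuton μ) {G : Set (ℝ × ℝ)}
    (hG : MeasurableSet G) (c : ℕ → ℝ≥0∞) :
    ∑ π : Equiv.Perm (Fin n), ∑ S : Finset (Fin n), (n.factorial : ℝ≥0∞) *
      (Measure.pi fun _ : Fin n => μ) (patCell π ∩ goodCell G S) * c S.card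
      = ∫⁻ p, c (Finset.univ.filter fun i => p i ∈ G).card ∂(Measure.pi fun _ : Fin n => μ) := by
  rw [← sum_lintegral_cells hμ]
  · refine Finset.sum_congr rfl fun π _ => ?_
    rw [lintegral_cell_split _ hG (fun S => c S.card) _ (measurableSet_patCell π), Finset.mul_sum]
    simp only [mul_assoc]
  · intro σ p
    congr 1
    refine Finset.card_bij (fun i _ => σ i) ?_ ?_ ?_
    · intro i hi; simpa using hi
    · intro i _ j _ h; exact σ.injective h
    · intro j hj; exact ⟨σ.symm j, by simpa using hj, by simp⟩

open Classical in
lemma lintegral_bad {n : ℕ} {μ : Measure (ℝ × ℝ)} [IsProbabilityMeasure μ] {G : Set (ℝ × ℝ)}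
    (hG : MeasurableSet G) :
    ∫⁻ p, ((n - (Finset.univ.filter fun i => p i ∈ G).card : ℕ) : ℝ≥0∞)
      ∂(Measure.pi fun _ : Fin n => μ) = n * μ Gᶜ := by
  have h : ∀ p : Fin n → ℝ × ℝ, ((n - (Finset.univ.filter fun i => p i ∈ G).card : ℕ) : ℝ≥0∞) =
      ∑ i, (Gᶜ).indicator 1 (p i) := by
    intro p
    have h1 := Finset.card_filter_add_card_filter_not (s := (Finset.univ : Finset (Fin n)))
      (fun i => p i ∈ G)
    rw [Finset.card_univ, Fintype.card_fin] at h1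
    have h2 : n - (Finset.univ.filter fun i => p i ∈ G).card =
      (Finset.univ.filter fun i => ¬ p i ∈ G).card := by omega
    rw [h2, Finset.card_filter]
    push_cast
    refine Finset.sum_congr rfl fun i _ => ?_
    by_cases h : p i ∈ G <;> simp [h]
  simp only [h]
  rw [lintegral_finsetSum]
  · have : ∀ i : Fin n, ∫⁻ p, (Gᶜ).indicator 1 (p i) ∂(Measure.pi fun _ : Fin n => μ) = μ Gᶜ := by
      intro i
      rw [(measurePreserving_eval (fun _ : Fin n => μ) i).lintegral_comp
        (f := (Gᶜ).indicator 1) (measurable_one.indicator hG.compl)]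
      rw [lintegral_indicator_one hG.compl]
    simp [this]
  · intro i _
    exact (measurable_one.indicator hG.compl).comp (measurable_pi_apply i)

lemma negMulLog_sum_ge {L : Type*} [Fintype L] [Nonempty L] (a : L → ℝ) (ha : ∀ s, 0 ≤ a s) :
    ∑ s, Real.negMulLog (a s) - (∑ s, a s) * Real.log (Fintype.card L) ≤
      Real.negMulLog (∑ s, a s) := by
  set N : ℝ := (Fintype.card L : ℝ) with hN
  have hNpos : 0 < N := by rw [hN]; exact_mod_cast Fintype.card_pos
  have h := Real.concaveOn_negMulLog.le_map_sum (t := Finset.univ) (w := fun _ : L => N⁻¹)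
    (p := a) (fun _ _ => by positivity)
    (by simp [Finset.sum_const, Finset.card_univ, ← hN, hNpos.ne']) (fun s _ => ha s)
  simp only [smul_eq_mul, ← Finset.mul_sum] at h
  rw [Real.negMulLog_mul] at h
  have h2 : Real.negMulLog N⁻¹ = N⁻¹ * Real.log N := by
    rw [Real.negMulLog, Real.log_inv]; ring
  rw [h2] at h
  have h3 := mul_le_mul_of_nonneg_left h hNpos.le
  have e1 : N * (N⁻¹ * ∑ s, Real.negMulLog (a s)) = ∑ s, Real.negMulLog (a s) := by
    field_simp
  have e2 : N * ((∑ s, a s) * (N⁻¹ * Real.log N) + N⁻¹ * Real.negMulLog (∑ s, a s)) =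
      (∑ s, a s) * Real.log N + Real.negMulLog (∑ s, a s) := by
    field_simp
  rw [e1, e2] at h3
  linarith

lemma sum_negMulLog_le {L : Type*} [Fintype L] [Nonempty L] (a : L → ℝ) (ha : ∀ s, 0 ≤ a s)
    (h1 : ∑ s, a s = 1) : ∑ s, Real.negMulLog (a s) ≤ Real.log (Fintype.card L) := by
  have := negMulLog_sum_ge a ha
  rw [h1, Real.negMulLog_one] at this
  linarith

lemma negMulLog_ge_aux {a M : ℝ} {n k : ℕ} (hn : 1 ≤ n) (hM : 1 ≤ M) (ha : 0 ≤ a)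
    (h : a * k.factorial ≤ M ^ n) :
    a * (k * Real.log n - n * (Real.log M + 1)) ≤ Real.negMulLog a := by
  rcases ha.eq_or_lt with rfl | ha
  · simp
  rw [Real.negMulLog]
  have hn' : (0:ℝ) < n := by exact_mod_cast hn
  have h1 := Real.pow_div_factorial_le_exp (x := (n:ℝ)) hn'.le k
  have hk : (0:ℝ) < k.factorial := by exact_mod_cast k.factorial_pos
  rw [div_le_iff₀ hk] at h1
  have h2 : a * (n:ℝ) ^ k ≤ M ^ n * Real.exp n := by
    calc a * (n:ℝ) ^ k ≤ a * (Real.exp n * k.factorial) := by gcongr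
      _ = (a * k.factorial) * Real.exp n := by ring
      _ ≤ _ := by gcongr
  have h3 := Real.log_le_log (by positivity) h2
  have hM0 : 0 < M := by linarith
  rw [Real.log_mul ha.ne' (by positivity), Real.log_mul (by positivity) (Real.exp_pos _).ne',
    Real.log_pow, Real.log_pow, Real.log_exp] at h3
  nlinarith

lemma patternProb_nonneg {n : ℕ} (μ : Measure (ℝ × ℝ)) (π : Equiv.Perm (Fin n)) :
    0 ≤ patternProb μ π := by unfold patternProb; positivity

lemma sum_patternProb {n : ℕ} {μ : Measure (ℝ × ℝ)} (hμ : IsPermuton μ) :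
    ∑ π : Equiv.Perm (Fin n), patternProb μ π = 1 := by
  have := permuton_prob hμ
  have h := sum_lintegral_cells (n := n) hμ (fun _ => 1) (fun _ _ => rfl)
  simp only [lintegral_const, one_mul, Measure.restrict_apply MeasurableSet.univ, Set.univ_inter,
    measure_univ] at h
  have h2 := congrArg ENNReal.toReal h
  rw [ENNReal.toReal_sum (fun π _ => ENNReal.mul_ne_top (by simp) (measure_ne_top _ _))] at h2
  simpa [patternProb_eq hμ, ENNReal.toReal_mul] using h2

lemma samplingEntropy_le {n : ℕ} {μ : Measure (ℝ × ℝ)} (hμ : IsPermuton μ) :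
    samplingEntropy μ n ≤ n * Real.log n := by
  have h := sum_negMulLog_le (fun π : Equiv.Perm (Fin n) => patternProb μ π)
    (patternProb_nonneg μ) (sum_patternProb hμ)
  rw [Fintype.card_perm, Fintype.card_fin] at h
  refine h.trans ?_
  rw [← Real.log_pow]
  refine Real.log_le_log (by exact_mod_cast n.factorial_pos) ?_
  exact_mod_cast Nat.factorial_le_pow n

lemma samplingEntropy_ge {n : ℕ} (hn : 1 ≤ n) {μ : Measure (ℝ × ℝ)} (hμ : IsPermuton μ)
    {G : Set (ℝ × ℝ)} (hG : MeasurableSet G) (M : ℝ≥0) (hM : 1 ≤ M)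
    (hMG : μ.restrict G ≤
      M • ((volume.restrict (Set.Icc (0:ℝ) 1)).prod (volume.restrict (Set.Icc (0:ℝ) 1)))) :
    (1 - (μ Gᶜ).toReal) * (n * Real.log n) - n * (Real.log M + 1 + Real.log 2) ≤
      samplingEntropy μ n := by
  classical
  have := permuton_prob hμ
  set P := Measure.pi fun _ : Fin n => μ with hP
  let a : Equiv.Perm (Fin n) → Finset (Fin n) → ℝ :=
    fun π S => n.factorial * (P (patCell π ∩ goodCell G S)).toReal
  have ha : ∀ π S, 0 ≤ a π S := fun π S => by positivity
  have hfin : ∀ π (S : Finset (Fin n)), (n.factorial : ℝ≥0∞) * P (patCell π ∩ goodCell G S) ≠ ⊤ :=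
    fun π S => ENNReal.mul_ne_top (by simp) (measure_ne_top _ _)
  have hsum : ∀ π, ∑ S, a π S = patternProb μ π := by
    intro π
    rw [patternProb_eq hμ, ← Finset.mul_sum]
    congr 1
    have h := lintegral_cell_split P hG (fun _ => 1) (patCell π) (measurableSet_patCell π)
    simp only [lintegral_const, one_mul, mul_one, Measure.restrict_apply MeasurableSet.univ,
      Set.univ_inter] at h
    rw [h, ENNReal.toReal_sum (fun _ _ => measure_ne_top _ _)]
  have hbad : ∑ π, ∑ S : Finset (Fin n), a π S * ((n - S.card : ℕ) : ℝ)
      = n * (μ Gᶜ).toReal := by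
    have h := sum_cells_card (n := n) hμ hG (fun k => ((n - k : ℕ) : ℝ≥0∞))
    rw [lintegral_bad hG] at h
    have h2 := congrArg ENNReal.toReal h
    have hf : ∀ π (S : Finset (Fin n)), (n.factorial : ℝ≥0∞) * P (patCell π ∩ goodCell G S)
        * ((n - S.card : ℕ) : ℝ≥0∞) ≠ ⊤ := fun π S => ENNReal.mul_ne_top (hfin π S) (by simp)
    rw [ENNReal.toReal_sum (fun π _ => ENNReal.sum_ne_top.2 fun S _ => hf π S)] at h2
    simp_rw [ENNReal.toReal_sum (fun S _ => hf _ S)] at h2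
    simpa only [ENNReal.toReal_mul, ENNReal.toReal_natCast] using h2
  have hbd : ∀ π (S : Finset (Fin n)),
      a π S * (S.card * Real.log n - n * (Real.log M + 1)) ≤ Real.negMulLog (a π S) := by
    intro π S
    refine negMulLog_ge_aux hn (by exact_mod_cast hM) (ha π S) ?_
    have h := cell_bound hμ M hM hMG π S
    have h2 := ENNReal.toReal_mono (ENNReal.pow_ne_top ENNReal.coe_ne_top) h
    simpa only [ENNReal.toReal_mul, ENNReal.toReal_natCast, ENNReal.toReal_pow,
      ENNReal.coe_toReal] using h2
  have hlog : Real.log (Fintype.card (Finset (Fin n))) = n * Real.log 2 := by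
    simp
  have hπ : ∀ π, ∑ S, a π S * (S.card * Real.log n - n * (Real.log M + 1))
      - patternProb μ π * (n * Real.log 2) ≤ Real.negMulLog (patternProb μ π) := by
    intro π
    have h := negMulLog_sum_ge (a π) (ha π)
    rw [hlog, hsum] at h
    have h2 := Finset.sum_le_sum (s := Finset.univ) fun S _ => hbd π S
    linarith
  have htot := Finset.sum_le_sum (s := Finset.univ) fun π _ => hπ π
  refine le_trans (le_of_eq ?_) htot
  rw [Finset.sum_sub_distrib, ← Finset.sum_mul, sum_patternProb hμ]
  have hr : ∀ π (S : Finset (Fin n)), a π S * (S.card * Real.log n - n * (Real.log M + 1)) =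
      a π S * (n * Real.log n - n * (Real.log M + 1)) -
        a π S * ((n - S.card : ℕ) : ℝ) * Real.log n := by
    intro π S
    have : S.card ≤ n := by simpa using S.card_le_univ
    rw [Nat.cast_sub this]; ring
  simp only [hr, Finset.sum_sub_distrib, ← Finset.sum_mul, hsum, sum_patternProb hμ, hbad]
  ring

lemma exists_good {μ : Measure (ℝ × ℝ)} (hμ : IsPermuton μ)
    (hac : μ ≪ (volume : Measure (ℝ × ℝ))) {ε : ℝ} (hε : 0 < ε) :
    ∃ (G : Set (ℝ × ℝ)) (M : ℝ≥0), MeasurableSet G ∧ 1 ≤ M ∧ (μ Gᶜ).toReal < ε ∧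
      μ.restrict G ≤
      M • ((volume.restrict (Set.Icc (0:ℝ) 1)).prod (volume.restrict (Set.Icc (0:ℝ) 1))) := by
  have := permuton_prob hμ
  set lam : Measure ℝ := volume.restrict (Set.Icc (0:ℝ) 1) with hlam
  set l2 := lam.prod lam with hl2
  have hl2' : l2 = volume.restrict (Set.Icc (0:ℝ) 1 ×ˢ Set.Icc (0:ℝ) 1) := by
    rw [hl2, hlam, Measure.prod_restrict]; rfl
  have hac2 : μ ≪ l2 := by
    rw [hl2']
    have h : μ = μ.restrict (Set.Icc (0:ℝ) 1 ×ˢ Set.Icc (0:ℝ) 1) :=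
      (Measure.restrict_eq_self_of_ae_mem (mem_ae_iff.2 hμ.1)).symm
    rw [h]
    exact hac.restrict _
  set f := μ.rnDeriv l2 with hf
  have hfm : Measurable f := Measure.measurable_rnDeriv _ _
  have hwd : l2.withDensity f = μ := Measure.withDensity_rnDeriv_eq _ _ hac2
  let B : ℕ → Set (ℝ × ℝ) := fun m => {q | ((m:ℝ≥0∞)) < f q}
  have hB : ∀ m, MeasurableSet (B m) := fun m => measurableSet_lt measurable_const hfm
  have hanti : Antitone B := fun m k hmk q hq =>
    lt_of_le_of_lt (by exact_mod_cast hmk) (show (k:ℝ≥0∞) < f q from hq)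
  have hlim := tendsto_measure_iInter_atTop (μ := μ) (s := B)
    (fun m => (hB m).nullMeasurableSet) hanti ⟨0, measure_ne_top _ _⟩
  have hzero : μ (⋂ m, B m) = 0 := by
    refine hac2 ?_
    have h := Measure.rnDeriv_lt_top μ l2
    refine measure_mono_null ?_ (ae_iff.1 h)
    intro q hq hlt
    obtain ⟨m, hm⟩ := ENNReal.exists_nat_gt hlt.ne
    exact absurd (show (m:ℝ≥0∞) < f q from Set.mem_iInter.1 hq m) hm.asymm
  rw [hzero] at hlim
  have hev := (hlim.eventually (gt_mem_nhds (ENNReal.ofReal_pos.2 hε))).and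
    (eventually_ge_atTop 1)
  obtain ⟨m, hm, hm1⟩ := hev.exists
  refine ⟨(B m)ᶜ, m, (hB m).compl, by exact_mod_cast hm1, ?_, ?_⟩
  · rw [compl_compl]
    have := (ENNReal.toReal_lt_toReal (measure_ne_top _ _) (by simp)).2 hm
    rwa [ENNReal.toReal_ofReal hε.le] at this
  · refine Measure.le_iff.2 fun s hs => ?_
    rw [Measure.restrict_apply hs, ← hwd, withDensity_apply _ (hs.inter (hB m).compl)]
    calc ∫⁻ q in s ∩ (B m)ᶜ, f q ∂l2 ≤ ∫⁻ q in s ∩ (B m)ᶜ, (m:ℝ≥0∞) ∂l2 :=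
          setLIntegral_mono measurable_const fun q hq => not_lt.1 hq.2
      _ = m * l2 (s ∩ (B m)ᶜ) := by rw [setLIntegral_const]
      _ ≤ m * l2 s := by gcongr; exact Set.inter_subset_left
      _ = _ := by simp [ENNReal.smul_def]

/-- If a permuton μ is absolutely continuous with respect to two-dimensional Lebesgue
measure, then H_n(μ)/(n log n) → 1. -/
theorem absolutelyContinuous_samplingEntropy_superlinear
    (μ : Measure (ℝ × ℝ)) (hμ : IsPermuton μ)
    (hac : μ ≪ (volume : Measure (ℝ × ℝ))) :
    Tendsto (fun n : ℕ => samplingEntropy μ n / (n * Real.log n)) atTop (nhds 1) := by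
  refine tendsto_order.2 ⟨fun b hb => ?_, fun b hb => ?_⟩
  · obtain ⟨G, M, hG, hM, hδ, hMG⟩ := exists_good hμ hac (ε := (1 - b) / 2) (by linarith)
    set C := Real.log M + 1 + Real.log 2
    have hlog : Tendsto (fun n : ℕ => Real.log n) atTop atTop :=
      Real.tendsto_log_atTop.comp tendsto_natCast_atTop_atTop
    filter_upwards [hlog.eventually_gt_atTop (2 * C / (1 - b)), eventually_ge_atTop 2]
      with n hn hn2
    have hn' : (1:ℝ) < n := by exact_mod_cast hn2
    have hlp : 0 < Real.log n := Real.log_pos hn'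
    have h := samplingEntropy_ge (by omega) hμ hG M hM hMG (n := n)
    rw [lt_div_iff₀ (by positivity)]
    refine lt_of_lt_of_le ?_ h
    rw [div_lt_iff₀ (by linarith)] at hn
    have h1 : (n:ℝ) * (2 * C) < n * (Real.log n * (1 - b)) :=
      mul_lt_mul_of_pos_left hn (by linarith)
    have h2 : (μ Gᶜ).toReal * (n * Real.log n) ≤ (1 - b) / 2 * (n * Real.log n) := by
      gcongr
    nlinarith
  · filter_upwards [eventually_ge_atTop 2] with n hn2
    have hn' : (1:ℝ) < n := by exact_mod_cast hn2
    have hlp : 0 < Real.log n := Real.log_pos hn'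
    refine lt_of_le_of_lt ?_ hb
    rw [div_le_one (by positivity)]
    exact samplingEntropy_le hμ
end

section
/- Let μ be a permuton and let μ_ac be the absolutely continuous part of μ in the Lebesgue decomposition of μ with respect to two-dimensional Lebesgue measure on [0,1]². Then liminf_{n→∞} H_n(μ)/(n·log n) ≥ ‖μ_ac‖, where ‖μ_ac‖ denotes the total mass μ_ac([0,1]²). -/
open MeasureTheory Filter

namespace PermEnt

lemma pi_le_smul {X : Type*} [MeasurableSpace X] (α β : Measure X) [SigmaFinite α] [SigmaFinite β]
    {ι : Type*} [Fintype ι] (c : ENNReal) (hc0 : c ≠ 0) (hc : c ≠ ⊤) (h : ∀ s, α s ≤ c * β s)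
    (s : Set (ι → X)) (hs : MeasurableSet s) :
    Measure.pi (fun _ : ι => α) s ≤ c ^ (Fintype.card ι) * Measure.pi (fun _ : ι => β) s := by
  set d := c ^ (Fintype.card ι) with hd
  have hd0 : d ≠ 0 := pow_ne_zero _ hc0
  have hdt : d ≠ ⊤ := ENNReal.pow_ne_top hc
  have key : (d⁻¹ • Measure.pi (fun _ : ι => α)).toOuterMeasure ≤
      OuterMeasure.pi (fun _ : ι => β.toOuterMeasure) := by
    rw [OuterMeasure.le_pi]
    intro t _
    have h1 : Measure.pi (fun _ : ι => α) (Set.univ.pi t) ≤ d * ∏ i, β (t i) := by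
      rw [Measure.pi_pi, hd, ← Finset.card_univ, ← Finset.prod_const, ← Finset.prod_mul_distrib]
      exact Finset.prod_le_prod' fun i _ => h _
    change d⁻¹ * Measure.pi (fun _ : ι => α) (Set.univ.pi t) ≤ _
    calc _ ≤ d⁻¹ * (d * ∏ i, β (t i)) := by gcongr
      _ = ∏ i, β (t i) := by rw [← mul_assoc, ENNReal.inv_mul_cancel hd0 hdt, one_mul]
  have h2 := key s
  have h3 : OuterMeasure.pi (fun _ : ι => β.toOuterMeasure) s = Measure.pi (fun _ : ι => β) s := by
    rw [Measure.pi, toMeasure_apply _ _ hs]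
  rw [h3] at h2
  change d⁻¹ * Measure.pi (fun _ : ι => α) s ≤ _ at h2
  calc _ = d * (d⁻¹ * Measure.pi (fun _ : ι => α) s) := by
        rw [← mul_assoc, ENNReal.mul_inv_cancel hd0 hdt, one_mul]
    _ ≤ _ := by gcongr

lemma mp_perm {X : Type*} [MeasurableSpace X] (α : Measure X) [SigmaFinite α]
    {ι : Type*} [Fintype ι] (τ : Equiv.Perm ι) :
    MeasurePreserving (fun p : ι → X => p ∘ τ) (Measure.pi fun _ => α) (Measure.pi fun _ => α) := by
  have := measurePreserving_arrowCongr' (fun _ : ι => α) (fun _ : ι => α) τ.symm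
    (MeasurableEquiv.refl X) (fun _ => MeasurePreserving.id _)
  convert! this

lemma perm_eq_one {ι κ : Type*} [Fintype ι] [LinearOrder κ] (r : ι → κ)
    (hr : Function.Injective r) (θ : Equiv.Perm ι) (h : ∀ i j, r i < r j ↔ r (θ i) < r (θ j)) :
    θ = 1 := by
  let _ : LinearOrder ι := LinearOrder.lift' r hr
  have hlt : ∀ i j : ι, i < j ↔ r i < r j := fun i j => Iff.rfl
  have hle : ∀ i j : ι, θ i ≤ θ j ↔ i ≤ j := by
    intro i j
    rw [← not_lt, ← not_lt, hlt, hlt, ← h]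
  let e : ι ≃o ι := ⟨θ, fun {i j} => hle i j⟩
  have : e = OrderIso.refl ι := Subsingleton.elim _ _
  ext i
  exact congrArg (fun f : ι ≃o ι => f i) this

lemma pi_order_le {X : Type*} [MeasurableSpace X] (α : Measure X) [IsProbabilityMeasure α]
    {ι κ : Type*} [Fintype ι] [LinearOrder κ] (f : X → ℝ) (hf : Measurable f) (r : ι → κ)
    (hr : Function.Injective r) :
    ((Fintype.card ι).factorial : ENNReal) * Measure.pi (fun _ : ι => α)
      {p | ∀ i j, r i < r j → f (p i) < f (p j)} ≤ 1 := by
  classical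
  set D : Set (ι → X) := {p | ∀ i j, r i < r j → f (p i) < f (p j)} with hD
  have hDm : MeasurableSet D := by
    simp only [hD, Set.ofPred_forall]
    refine MeasurableSet.iInter fun i => MeasurableSet.iInter fun j => MeasurableSet.iInter fun _ => ?_
    exact measurableSet_lt (by fun_prop) (by fun_prop)
  have hiff : ∀ p ∈ D, ∀ i j, r i < r j ↔ f (p i) < f (p j) := by
    intro p hp i j
    refine ⟨hp i j, fun h => ?_⟩
    rcases lt_trichotomy (r i) (r j) with h' | h' | h'
    · exact h'
    · rw [hr h'] at h; exact absurd h (lt_irrefl _)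
    · exact absurd (hp j i h') (not_lt.2 h.le)
  have hdisj : Pairwise (Function.onFun Disjoint
      fun τ : Equiv.Perm ι => (fun p : ι → X => p ∘ τ) ⁻¹' D) := by
    intro τ τ' hne
    refine Set.disjoint_left.2 fun p hp hp' => hne ?_
    have h1 := hiff _ hp
    have h2 := hiff _ hp'
    have : τ⁻¹ * τ' = 1 := by
      apply perm_eq_one r hr
      intro i j
      rw [h2 i j, h1]
      simp
    exact (inv_mul_eq_one.1 this)
  have h := measure_iUnion (μ := Measure.pi (fun _ : ι => α)) hdisj
    (fun τ => (mp_perm α τ).measurable hDm)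
  have h' : ∀ τ : Equiv.Perm ι, Measure.pi (fun _ : ι => α) ((fun p : ι → X => p ∘ τ) ⁻¹' D) =
     Measure.pi (fun _ : ι => α) D := fun τ => (mp_perm α τ).measure_preimage hDm.nullMeasurableSet
  simp only [h', tsum_fintype, Finset.sum_const, Finset.card_univ, Fintype.card_perm, nsmul_eq_mul] at h
  rw [← h]
  exact prob_le_one

lemma pi_order2_le (ι κ κ' : Type*) [Fintype ι] [LinearOrder κ] [LinearOrder κ'] (r : ι → κ)
    (hr : Function.Injective r) (r' : ι → κ') (hr' : Function.Injective r') :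
    ((Fintype.card ι).factorial : ENNReal) ^ 2 * Measure.pi
      (fun _ : ι => (volume.restrict (Set.Icc (0:ℝ) 1)).prod (volume.restrict (Set.Icc (0:ℝ) 1)))
      {p | ∀ i j, (r i < r j → (p i).1 < (p j).1) ∧ (r' i < r' j → (p i).2 < (p j).2)} ≤ 1 := by
  set l : Measure ℝ := volume.restrict (Set.Icc (0:ℝ) 1)
  have : IsProbabilityMeasure l := ⟨by simp [l]⟩
  have h1 := pi_order_le l id measurable_id r hr
  have h2 := pi_order_le l id measurable_id r' hr'
  have mp := measurePreserving_arrowProdEquivProdArrow ℝ ℝ ι (fun _ => l) (fun _ => l)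
  have h3 := mp.measure_preimage_equiv ({p | ∀ i j, r i < r j → id (p i) < id (p j)} ×ˢ
    {p | ∀ i j, r' i < r' j → id (p i) < id (p j)})
  rw [Measure.prod_prod] at h3
  have hs : {p : ι → ℝ × ℝ| ∀ i j, (r i < r j → (p i).1 < (p j).1) ∧ (r' i < r' j → (p i).2 < (p j).2)}
     ⊆ (MeasurableEquiv.arrowProdEquivProdArrow ℝ ℝ ι) ⁻¹' ({p | ∀ i j, r i < r j → id (p i) < id (p j)} ×ˢ
    {p | ∀ i j, r' i < r' j → id (p i) < id (p j)}) := by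
    intro p hp
    exact ⟨fun i j => (hp i j).1, fun i j => (hp i j).2⟩
  calc _ ≤ _ := mul_le_mul_right (measure_mono hs) _
    _ = _ := by rw [h3]
    _ = _ := by rw [pow_two, mul_mul_mul_comm]
    _ ≤ 1 * 1 := mul_le_mul' h1 h2
    _ = 1 := one_mul 1


/-- The event in `patternProb`. -/
def E {n : ℕ} (π : Equiv.Perm (Fin n)) : Set (Fin n → ℝ × ℝ) :=
  {p : Fin n → ℝ × ℝ | ∀ i j : Fin n, i < j →
        (p i).1 < (p j).1 ∧ ((p i).2 < (p j).2 ↔ π i < π j)}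

/-- The event that exactly the indices in `S` fall in `A`. -/
def B {n : ℕ} (A : Set (ℝ × ℝ)) (S : Finset (Fin n)) : Set (Fin n → ℝ × ℝ) :=
  {p | ∀ i, p i ∈ A ↔ i ∈ S}

lemma measurableSet_E {n : ℕ} (π : Equiv.Perm (Fin n)) : MeasurableSet (E π) := by
  simp only [E, Set.ofPred_forall]
  refine MeasurableSet.iInter fun i => MeasurableSet.iInter fun j => MeasurableSet.iInter fun _ => ?_
  have h1 : MeasurableSet {p : Fin n → ℝ × ℝ | (p i).1 < (p j).1} :=
    measurableSet_lt (by fun_prop) (by fun_prop)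
  have h2 : MeasurableSet {p : Fin n → ℝ × ℝ | (p i).2 < (p j).2} :=
    measurableSet_lt (by fun_prop) (by fun_prop)
  exact h1.inter (h2.iff (MeasurableSet.const _))

lemma measurableSet_B {n : ℕ} {A : Set (ℝ × ℝ)} (hA : MeasurableSet A) (S : Finset (Fin n)) :
    MeasurableSet (B A S) := by
  simp only [B, Set.ofPred_forall]
  refine MeasurableSet.iInter fun i => ?_
  have h1 : MeasurableSet {p : Fin n → ℝ × ℝ | p i ∈ A} := (measurable_pi_apply i) hA
  exact h1.iff (MeasurableSet.const _)

lemma disjoint_B {n : ℕ} (A : Set (ℝ × ℝ)) :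
    Pairwise (Function.onFun Disjoint fun S : Finset (Fin n) => B A S) := by
  intro S T hne
  refine Set.disjoint_left.2 fun p hp hp' => hne ?_
  ext i
  rw [← hp i, ← hp' i]

lemma iUnion_B {n : ℕ} (A : Set (ℝ × ℝ)) : ⋃ S : Finset (Fin n), B A S = Set.univ := by
  classical
  ext p
  simp only [Set.mem_iUnion, Set.mem_univ, iff_true]
  exact ⟨Finset.univ.filter fun i => p i ∈ A, fun i => by simp⟩

lemma disjoint_E {n : ℕ} :
    Pairwise (Function.onFun Disjoint fun π : Equiv.Perm (Fin n) => E π) := by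
  intro σ τ hne
  refine Set.disjoint_left.2 fun p hp hp' => hne ?_
  have h : ∀ i j, i < j → (σ i < σ j ↔ τ i < τ j) := fun i j hij => by
    rw [← (hp i j hij).2, ← (hp' i j hij).2]
  have h' : ∀ i j, (σ i < σ j ↔ τ i < τ j) := by
    intro i j
    rcases lt_trichotomy i j with hij | hij | hij
    · exact h i j hij
    · subst hij; simp
    · have h1 := h j i hij
      have h2 : σ j ≠ σ i := fun h => hij.ne (σ.injective h)
      have h3 : τ j ≠ τ i := fun h => hij.ne (τ.injective h)
      rw [← not_le, ← not_le, h2.le_iff_lt, h3.le_iff_lt, h1]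
  have : σ * τ⁻¹ = 1 := by
    apply perm_eq_one (id : Fin n → Fin n) Function.injective_id
    intro i j
    have := h' (τ⁻¹ i) (τ⁻¹ j)
    simpa using this.symm
  exact mul_inv_eq_one.1 this

lemma sum_E_le {n : ℕ} (μ : Measure (ℝ × ℝ)) [IsProbabilityMeasure μ] :
    (n.factorial : ENNReal) * ∑ π : Equiv.Perm (Fin n), Measure.pi (fun _ : Fin n => μ) (E π) ≤ 1 := by
  have h := pi_order_le μ Prod.fst measurable_fst (id : Fin n → Fin n) Function.injective_id
  rw [Fintype.card_fin] at h
  refine le_trans ?_ h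
  gcongr
  rw [← tsum_fintype (L := .unconditional _), ← measure_iUnion disjoint_E (fun π => measurableSet_E π)]
  apply measure_mono
  intro p hp
  obtain ⟨π, hπ⟩ := Set.mem_iUnion.1 hp
  exact fun i j hij => (hπ i j hij).1

lemma E_inter_B_le {n : ℕ} (μ : Measure (ℝ × ℝ)) [IsProbabilityMeasure μ] (A : Set (ℝ × ℝ))
    (hA : MeasurableSet A) (K : ENNReal) (hK0 : K ≠ 0) (hKt : K ≠ ⊤)
    (hK : ∀ s, μ.restrict A s ≤ K *
      ((volume.restrict (Set.Icc (0:ℝ) 1)).prod (volume.restrict (Set.Icc (0:ℝ) 1))) s)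
    (hD : ∀ᵐ p ∂(Measure.pi (fun _ : Fin n => μ)), ∀ i j : Fin n, i ≠ j →
      (p i).1 ≠ (p j).1 ∧ (p i).2 ≠ (p j).2)
    (π : Equiv.Perm (Fin n)) (S : Finset (Fin n)) :
    (S.card.factorial : ENNReal) ^ 2 * ((n - S.card).factorial : ENNReal) *
      Measure.pi (fun _ : Fin n => μ) (E π ∩ B A S) ≤ K ^ S.card := by
  classical
  set lam := (volume.restrict (Set.Icc (0:ℝ) 1)).prod (volume.restrict (Set.Icc (0:ℝ) 1))
  have mp := measurePreserving_piEquivPiSubtypeProd (fun _ : Fin n => μ) (fun i => i ∈ S)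
  set F' : Set ({i // i ∈ S} → ℝ × ℝ) :=
    {p | ∀ i j : {i // i ∈ S}, ((i : Fin n) < j → (p i).1 < (p j).1) ∧
      (π i < π j → (p i).2 < (p j).2)} with hF'
  set G : Set ({i // i ∉ S} → ℝ × ℝ) :=
    {p | ∀ i j : {i // i ∉ S}, (i : Fin n) < j → (p i).1 < (p j).1} with hG
  have hF'm : MeasurableSet F' := by
    simp only [hF', Set.ofPred_forall]
    refine MeasurableSet.iInter fun i => MeasurableSet.iInter fun j => ?_
    have h1 : MeasurableSet {p : {i // i ∈ S} → ℝ × ℝ | (p i).1 < (p j).1} :=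
      measurableSet_lt (by fun_prop) (by fun_prop)
    have h2 : MeasurableSet {p : {i // i ∈ S} → ℝ × ℝ | (p i).2 < (p j).2} :=
      measurableSet_lt (by fun_prop) (by fun_prop)
    exact ((MeasurableSet.const _).imp h1).inter ((MeasurableSet.const _).imp h2)
  have hsub : ∀ᵐ p ∂(Measure.pi (fun _ : Fin n => μ)), p ∈ E π ∩ B A S → p ∈ (MeasurableEquiv.piEquivPiSubtypeProd (fun _ => ℝ × ℝ) (fun i => i ∈ S)) ⁻¹'
      ((F' ∩ Set.univ.pi fun _ => A) ×ˢ G) := by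
    filter_upwards [hD] with p hpD
    rintro ⟨hp, hp'⟩
    refine ⟨⟨fun i j => ⟨fun hij => (hp i j hij).1, fun hij => ?_⟩, fun i _ => (hp' i).2 i.2⟩,
      fun i j hij => (hp i j hij).1⟩
    change (p i).2 < (p j).2
    rcases lt_trichotomy (i : Fin n) j with h | h | h
    · exact (hp i j h).2.2 hij
    · rw [h] at hij; exact absurd hij (lt_irrefl _)
    · have h1 := (hp j i h).2
      have h2 : ¬ (p j).2 < (p i).2 := fun h3 => absurd (h1.1 h3) (not_lt.2 hij.le)
      exact lt_of_le_of_ne (not_lt.1 h2) (hpD i j h.ne').2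
  have h1 : Measure.pi (fun _ : {i // i ∈ S} => μ) (F' ∩ Set.univ.pi fun _ => A) ≤
      K ^ S.card * Measure.pi (fun _ : {i // i ∈ S} => lam) F' := by
    rw [← Measure.restrict_apply hF'm, Measure.restrict_pi_pi]
    have := pi_le_smul (μ.restrict A) lam K hK0 hKt hK F' hF'm
    simpa using this
  have h2 := pi_order2_le {i // i ∈ S} (Fin n) (Fin n) (fun i => (i : Fin n)) Subtype.val_injective
    (fun i => π i) (π.injective.comp Subtype.val_injective)
  have h3 := pi_order_le (ι := {i // i ∉ S}) μ Prod.fst measurable_fst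
    (fun i => (i : Fin n)) Subtype.val_injective
  have hc : Fintype.card {i // i ∉ S} = n - S.card := by
    rw [Fintype.card_subtype_compl]; simp
  rw [Fintype.card_coe] at h2
  rw [hc] at h3
  calc _ ≤ (S.card.factorial : ENNReal) ^ 2 * ((n - S.card).factorial : ENNReal) *
        (K ^ S.card * Measure.pi (fun _ : {i // i ∈ S} => lam) F' *
          Measure.pi (fun _ : {i // i ∉ S} => μ) G) := by
        gcongr
        have h4 : Measure.pi (fun _ : Fin n => μ) (E π ∩ B A S) ≤ Measure.pi (fun _ : Fin n => μ)
            ((MeasurableEquiv.piEquivPiSubtypeProd (fun _ => ℝ × ℝ) (fun i => i ∈ S)) ⁻¹'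
              ((F' ∩ Set.univ.pi fun _ => A) ×ˢ G)) := measure_mono_ae hsub
        refine h4.trans ?_
        rw [mp.measure_preimage_equiv, Measure.prod_prod]
        refine mul_le_mul' ?_ le_rfl
        refine le_trans (le_of_eq ?_) h1
        congr!
    _ = K ^ S.card * (((S.card.factorial : ENNReal) ^ 2 * Measure.pi (fun _ : {i // i ∈ S} => lam) F') *
        (((n - S.card).factorial : ENNReal) * Measure.pi (fun _ : {i // i ∉ S} => μ) G)) := by ring
    _ ≤ K ^ S.card * (1 * 1) := by gcongr
    _ = _ := by simp

lemma ae_distinct {n : ℕ} (μ : Measure (ℝ × ℝ)) [IsProbabilityMeasure μ] (f : ℝ × ℝ → ℝ)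
    (hf : Measurable f) (hmap : μ.map f = volume.restrict (Set.Icc (0:ℝ) 1)) :
    ∀ᵐ p ∂(Measure.pi (fun _ : Fin n => μ)), ∀ i j : Fin n, i ≠ j → f (p i) ≠ f (p j) := by
  rw [ae_all_iff]
  intro i
  rw [ae_all_iff]
  intro j
  by_cases hij : i = j
  · simp [hij]
  have hm : Measure.map (fun (p : Fin n → ℝ × ℝ) k => f (p k)) (Measure.pi (fun _ : Fin n => μ)) =
      (volume : Measure (Fin n → ℝ)).restrict (Set.univ.pi fun _ => Set.Icc (0:ℝ) 1) := by
    have : ∀ i : Fin n, SigmaFinite (Measure.map f μ) := fun _ => by rw [hmap]; infer_instance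
    rw [Measure.pi_map_pi (fun _ => hf.aemeasurable), volume_pi, Measure.restrict_pi_pi]
    simp [hmap]
  let V : Submodule ℝ (Fin n → ℝ) :=
    LinearMap.ker ((LinearMap.proj i : (Fin n → ℝ) →ₗ[ℝ] ℝ) - LinearMap.proj j)
  have hV : V ≠ ⊤ := by
    intro h
    have h1 : (Pi.single i 1 : Fin n → ℝ) ∈ V := h ▸ Submodule.mem_top
    simp [V, Ne.symm hij] at h1
  have h0 := Measure.addHaar_submodule (volume : Measure (Fin n → ℝ)) V hV
  have h1 : Measure.map (fun (p : Fin n → ℝ × ℝ) k => f (p k)) (Measure.pi (fun _ : Fin n => μ)) V = 0 := by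
    rw [hm]
    exact le_antisymm ((Measure.restrict_apply_le _ _).trans h0.le) zero_le
  have hmeas : Measurable (fun (p : Fin n → ℝ × ℝ) k => f (p k)) := by fun_prop
  rw [Measure.map_apply hmeas V.closed_of_finiteDimensional.measurableSet] at h1
  have h2 := measure_eq_zero_iff_ae_notMem.1 h1
  filter_upwards [h2] with p hp _ h
  apply hp
  simp [V, h]

lemma exists_perm {n : ℕ} (p : Fin n → ℝ × ℝ)
    (hD : ∀ i j : Fin n, i ≠ j → (p i).1 ≠ (p j).1 ∧ (p i).2 ≠ (p j).2) :
    ∃ τ π : Equiv.Perm (Fin n), p ∘ τ ∈ E π := by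
  set τ := Tuple.sort (fun i => (p i).1)
  have hτ : ∀ i j, i < j → (p (τ i)).1 < (p (τ j)).1 := fun i j hij =>
    lt_of_le_of_ne (Tuple.monotone_sort (fun i => (p i).1) hij.le)
      (hD _ _ fun h => hij.ne (τ.injective h)).1
  set ρ := Tuple.sort (fun i => (p (τ i)).2)
  have hρ : StrictMono (fun i => (p (τ (ρ i))).2) := fun i j hij =>
    lt_of_le_of_ne (Tuple.monotone_sort (fun i => (p (τ i)).2) hij.le)
      (hD _ _ fun h => hij.ne (ρ.injective (τ.injective h))).2
  refine ⟨τ, ρ⁻¹, fun i j hij => ⟨hτ i j hij, ?_⟩⟩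
  have := hρ.lt_iff_lt (a := ρ⁻¹ i) (b := ρ⁻¹ j)
  simpa using this

lemma sum_card_ge {n : ℕ} (μ : Measure (ℝ × ℝ)) [IsProbabilityMeasure μ] (A : Set (ℝ × ℝ))
    (hA : MeasurableSet A)
    (hD : ∀ᵐ p ∂(Measure.pi (fun _ : Fin n => μ)), ∀ i j : Fin n, i ≠ j →
      (p i).1 ≠ (p j).1 ∧ (p i).2 ≠ (p j).2) :
    (n : ENNReal) * μ A ≤ (n.factorial : ENNReal) * ∑ π : Equiv.Perm (Fin n), ∑ S : Finset (Fin n),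
      (S.card : ENNReal) * Measure.pi (fun _ : Fin n => μ) (E π ∩ B A S) := by
  classical
  set P := Measure.pi (fun _ : Fin n => μ) with hP
  let N : (Fin n → ℝ × ℝ) → ENNReal := fun p => ∑ i, A.indicator (fun _ => 1) (p i)
  have hind : Measurable (A.indicator (fun _ => (1 : ENNReal))) := measurable_const.indicator hA
  have hN : Measurable N := by fun_prop
  have h1 : ∫⁻ p, N p ∂P = n * μ A := by
    rw [lintegral_finsetSum _ (fun i _ => by fun_prop)]
    have : ∀ i : Fin n, ∫⁻ p, A.indicator (fun _ => (1 : ENNReal)) (p i) ∂P = μ A := by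
      intro i
      rw [(measurePreserving_eval (fun _ : Fin n => μ) i).lintegral_comp hind,
        lintegral_indicator hA]
      simp
    simp [this]
  have hperm : ∀ (τ : Equiv.Perm (Fin n)) p, N (p ∘ τ) = N p := fun τ p =>
    Equiv.sum_comp τ (fun i => A.indicator (fun _ => (1 : ENNReal)) (p i))
  have h2 : ∀ (τ π : Equiv.Perm (Fin n)),
      ∫⁻ p in (fun p : Fin n → ℝ × ℝ => p ∘ τ) ⁻¹' E π, N p ∂P = ∫⁻ p in E π, N p ∂P := by
    intro τ π
    rw [← (mp_perm μ τ).setLIntegral_comp_preimage (measurableSet_E π) hN]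
    simp [hperm, hP]
  have h3 : ∀ π : Equiv.Perm (Fin n),
      ∫⁻ p in E π, N p ∂P ≤ ∑ S : Finset (Fin n), (S.card : ENNReal) * P (E π ∩ B A S) := by
    intro π
    have : E π = ⋃ S : Finset (Fin n), E π ∩ B A S := by
      rw [← Set.inter_iUnion, iUnion_B, Set.inter_univ]
    calc _ = ∫⁻ p in ⋃ S : Finset (Fin n), E π ∩ B A S, N p ∂P := by rw [← this]
      _ ≤ ∑' S : Finset (Fin n), ∫⁻ p in E π ∩ B A S, N p ∂P := lintegral_iUnion_le _ _
      _ = ∑ S : Finset (Fin n), ∫⁻ p in E π ∩ B A S, N p ∂P := tsum_fintype _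
      _ = _ := by
        refine Finset.sum_congr rfl fun S _ => ?_
        rw [← setLIntegral_const]
        refine setLIntegral_congr_fun ((measurableSet_E π).inter (measurableSet_B hA S)) ?_
        intro p hp
        have : ∀ i, A.indicator (fun _ => (1 : ENNReal)) (p i) = if i ∈ S then 1 else 0 := by
          intro i
          simp only [Set.indicator, hp.2 i]
        simp [N, this]
  have hcov : ∀ᵐ p ∂P, p ∈ ⋃ τπ : Equiv.Perm (Fin n) × Equiv.Perm (Fin n),
      (fun p : Fin n → ℝ × ℝ => p ∘ τπ.1) ⁻¹' E τπ.2 := by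
    filter_upwards [hD] with p hp
    obtain ⟨τ, π, h⟩ := exists_perm p hp
    exact Set.mem_iUnion.2 ⟨(τ, π), h⟩
  calc (n : ENNReal) * μ A = ∫⁻ p, N p ∂P := h1.symm
    _ = ∫⁻ p in ⋃ τπ : Equiv.Perm (Fin n) × Equiv.Perm (Fin n),
      (fun p : Fin n → ℝ × ℝ => p ∘ τπ.1) ⁻¹' E τπ.2, N p ∂P := by
        rw [Measure.restrict_eq_self_of_ae_mem hcov]
    _ ≤ ∑' τπ : Equiv.Perm (Fin n) × Equiv.Perm (Fin n),
        ∫⁻ p in (fun p : Fin n → ℝ × ℝ => p ∘ τπ.1) ⁻¹' E τπ.2, N p ∂P := lintegral_iUnion_le _ _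
    _ = ∑ τ : Equiv.Perm (Fin n), ∑ π : Equiv.Perm (Fin n), ∫⁻ p in E π, N p ∂P := by
        rw [tsum_fintype, Fintype.sum_prod_type]
        simp only [h2]
    _ ≤ ∑ τ : Equiv.Perm (Fin n), ∑ π : Equiv.Perm (Fin n), ∑ S : Finset (Fin n),
        (S.card : ENNReal) * P (E π ∩ B A S) := by
        gcongr with τ _ π _
        exact h3 π
    _ = _ := by simp [Fintype.card_perm]

lemma entropy_split {ι : Type*} [Fintype ι] [Nonempty ι] (q : ι → ℝ) (hq : ∀ i, 0 ≤ q i) :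
    ∑ i, Real.negMulLog (q i) - (∑ i, q i) * Real.log (Fintype.card ι) ≤
      Real.negMulLog (∑ i, q i) := by
  set t := ∑ i, q i with ht
  have hN : (0 : ℝ) < Fintype.card ι := by exact_mod_cast Fintype.card_pos
  have ht0 : 0 ≤ t := Finset.sum_nonneg fun i _ => hq i
  rcases ht0.eq_or_lt with h0 | h0
  · have : ∀ i, q i = 0 := fun i =>
      (Finset.sum_eq_zero_iff_of_nonneg (fun i _ => hq i)).1 h0.symm i (Finset.mem_univ i)
    simp [this, ← h0]
  have h1 : ∀ i, Real.negMulLog (q i) - q i * Real.log (Fintype.card ι) + q i * Real.log t ≤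
      t / Fintype.card ι - q i := by
    intro i
    rcases (hq i).eq_or_lt with h | h
    · rw [← h]; simp; positivity
    have h2 := Real.log_le_sub_one_of_pos (x := t / (q i * Fintype.card ι)) (by positivity)
    rw [Real.log_div h0.ne' (by positivity), Real.log_mul h.ne' hN.ne'] at h2
    have h3 := mul_le_mul_of_nonneg_left h2 h.le
    have h4 : q i * (t / (q i * Fintype.card ι) - 1) = t / Fintype.card ι - q i := by
      field_simp
    rw [h4] at h3
    rw [Real.negMulLog]
    linarith
  have h2 := Finset.sum_le_sum fun i (_ : i ∈ Finset.univ) => h1 i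
  rw [Finset.sum_add_distrib, Finset.sum_sub_distrib, Finset.sum_sub_distrib, ← Finset.sum_mul,
    ← Finset.sum_mul, ← ht, Finset.sum_const, Finset.card_univ, nsmul_eq_mul,
    mul_div_cancel₀ _ hN.ne'] at h2
  rw [Real.negMulLog]
  linarith

lemma q_bound (n m k : ℕ) (hn : 1 ≤ n) (hm : m ≤ n) (hk : 1 ≤ k) (x : ℝ) (hx : 0 ≤ x)
    (h : (m.factorial : ℝ) ^ 2 * ((n - m).factorial : ℝ) * x ≤ (k : ℝ) ^ m) :
    (n.factorial * x) * (m * Real.log n - n * (Real.log (2 * k) + 1)) ≤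
      Real.negMulLog (n.factorial * x) := by
  set q := (n.factorial : ℝ) * x with hq
  have hq0 : 0 ≤ q := by positivity
  rcases hq0.eq_or_lt with h0 | h0
  · simp [← h0]
  have hn0 : (0 : ℝ) < n := by exact_mod_cast hn
  have hk0 : (0 : ℝ) < k := by exact_mod_cast hk
  have hk1 : (1 : ℝ) ≤ k := by exact_mod_cast hk
  have h1 : q * m.factorial ≤ (2 * k) ^ n := by
    have e : (n.factorial : ℝ) = n.choose m * m.factorial * (n - m).factorial := by
      exact_mod_cast (Nat.choose_mul_factorial_mul_factorial hm).symm
    calc q * m.factorial = n.choose m * ((m.factorial : ℝ) ^ 2 * ((n - m).factorial : ℝ) * x) := by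
          rw [hq, e]; ring
      _ ≤ 2 ^ n * k ^ n := by
          apply mul_le_mul _ _ (by positivity) (by positivity)
          · exact_mod_cast Nat.choose_le_two_pow n m
          · exact h.trans (pow_le_pow_right₀ hk1 hm)
      _ = _ := by rw [mul_pow]
  have h2 : (n : ℝ) ^ m ≤ Real.exp n * m.factorial := by
    have := Real.pow_div_factorial_le_exp (n : ℝ) hn0.le m
    rwa [div_le_iff₀ (by positivity)] at this
  have h3 : q * (n : ℝ) ^ m ≤ (2 * k) ^ n * Real.exp n := by
    calc _ ≤ q * (Real.exp n * m.factorial) := by gcongr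
      _ = (q * m.factorial) * Real.exp n := by ring
      _ ≤ _ := by gcongr
  clear_value q
  have h4 := Real.log_le_log (by positivity) h3
  rw [Real.log_mul h0.ne' (by positivity), Real.log_mul (by positivity) (by positivity),
    Real.log_pow, Real.log_pow, Real.log_exp] at h4
  rw [Real.negMulLog]
  have : q * (m * Real.log n - n * (Real.log (2 * k) + 1)) ≤ q * (-Real.log q) := by
    gcongr
    linarith
  linarith

lemma entropy_ge {n : ℕ} (hn : 1 ≤ n) (μ : Measure (ℝ × ℝ)) [IsProbabilityMeasure μ]
    (A : Set (ℝ × ℝ)) (hA : MeasurableSet A) (k : ℕ) (hk : 1 ≤ k)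
    (hK : ∀ s, μ.restrict A s ≤ k *
      ((volume.restrict (Set.Icc (0:ℝ) 1)).prod (volume.restrict (Set.Icc (0:ℝ) 1))) s)
    (hD : ∀ᵐ p ∂(Measure.pi (fun _ : Fin n => μ)), ∀ i j : Fin n, i ≠ j →
      (p i).1 ≠ (p j).1 ∧ (p i).2 ≠ (p j).2) :
    n * (μ A).toReal * Real.log n - n * (Real.log (2 * k) + 1 + Real.log 2) ≤
      samplingEntropy μ n := by
  classical
  set P := Measure.pi (fun _ : Fin n => μ) with hP
  let q : Equiv.Perm (Fin n) → Finset (Fin n) → ℝ :=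
    fun π S => n.factorial * (P (E π ∩ B A S)).toReal
  have hq0 : ∀ π S, 0 ≤ q π S := fun π S => by positivity
  have hsum : ∀ π, patternProb μ π = ∑ S, q π S := by
    intro π
    have : P (E π) = ∑ S : Finset (Fin n), P (E π ∩ B A S) := by
      rw [← tsum_fintype (L := .unconditional _), ← measure_iUnion, ← Set.inter_iUnion, iUnion_B,
        Set.inter_univ]
      · intro S T hST
        exact (disjoint_B A hST).mono Set.inter_subset_right Set.inter_subset_right
      · exact fun S => (measurableSet_E π).inter (measurableSet_B hA S)
    change (n.factorial : ℝ) * (P (E π)).toReal = _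
    rw [this, ENNReal.toReal_sum (fun _ _ => measure_ne_top _ _), Finset.mul_sum]
  have ht0 : ∀ π : Equiv.Perm (Fin n), 0 ≤ patternProb μ π := fun π => by
    rw [hsum]; exact Finset.sum_nonneg fun S _ => hq0 π S
  have ht1 : ∑ π : Equiv.Perm (Fin n), patternProb μ π ≤ 1 := by
    have := ENNReal.toReal_mono ENNReal.one_ne_top (sum_E_le (n := n) μ)
    rw [ENNReal.toReal_mul, ENNReal.toReal_sum (fun _ _ => measure_ne_top _ _), Finset.mul_sum] at this
    simp only [ENNReal.toReal_natCast, ENNReal.toReal_one] at this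
    exact this
  have hcard : n * (μ A).toReal ≤ ∑ π, ∑ S, q π S * S.card := by
    have h := sum_card_ge μ A hA hD
    have hfin : ∀ π : Equiv.Perm (Fin n), ∀ S : Finset (Fin n),
      (S.card : ENNReal) * P (E π ∩ B A S) ≠ ⊤ := fun π S =>
        ENNReal.mul_ne_top (ENNReal.natCast_ne_top _) (measure_ne_top _ _)
    have h' := ENNReal.toReal_mono (ENNReal.mul_ne_top (ENNReal.natCast_ne_top _)
      (ENNReal.sum_ne_top.2 fun π _ => ENNReal.sum_ne_top.2 fun S _ => hfin π S)) h
    rw [ENNReal.toReal_mul, ENNReal.toReal_mul, ENNReal.toReal_sum (fun π _ =>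
      ENNReal.sum_ne_top.2 fun S _ => hfin π S), Finset.mul_sum] at h'
    simp only [ENNReal.toReal_natCast] at h'
    refine h'.trans (le_of_eq ?_)
    refine Finset.sum_congr rfl fun π _ => ?_
    rw [ENNReal.toReal_sum (fun S _ => hfin π S), Finset.mul_sum]
    refine Finset.sum_congr rfl fun S _ => ?_
    rw [ENNReal.toReal_mul, ENNReal.toReal_natCast]
    simp only [q]; ring
  have hqb : ∀ π S, q π S * (S.card * Real.log n - n * (Real.log (2 * k) + 1)) ≤
      Real.negMulLog (q π S) := by
    intro π S
    have h := E_inter_B_le μ A hA k (by exact_mod_cast (by omega : k ≠ 0)) (ENNReal.natCast_ne_top k)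
      hK hD π S
    have h' := ENNReal.toReal_mono (ENNReal.pow_ne_top (ENNReal.natCast_ne_top k)) h
    simp only [ENNReal.toReal_mul, ENNReal.toReal_pow, ENNReal.toReal_natCast] at h'
    exact q_bound n S.card k hn (by simpa using S.card_le_univ) hk _ ENNReal.toReal_nonneg h'
  have hL : 0 ≤ Real.log n := Real.log_natCast_nonneg n
  have hk1 : (1 : ℝ) ≤ k := by exact_mod_cast hk
  have hLk : 0 ≤ Real.log (2 * k) := Real.log_nonneg (by linarith)
  have hL2 : 0 ≤ Real.log 2 := Real.log_nonneg (by norm_num)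
  have hcardF : Real.log (Fintype.card (Finset (Fin n))) = n * Real.log 2 := by
    simp [Real.log_pow]
  have hmain : ∀ π : Equiv.Perm (Fin n), (∑ S, q π S * S.card) * Real.log n -
      patternProb μ π * (n * (Real.log (2 * k) + 1 + Real.log 2)) ≤
      Real.negMulLog (patternProb μ π) := by
    intro π
    have h1 := entropy_split (q π) (hq0 π)
    have h2 := Finset.sum_le_sum fun S (_ : S ∈ Finset.univ) => hqb π S
    rw [← hsum, hcardF] at h1
    have h3 : ∑ S, q π S * (S.card * Real.log n - n * (Real.log (2 * k) + 1)) =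
      (∑ S, q π S * S.card) * Real.log n - patternProb μ π * (n * (Real.log (2 * k) + 1)) := by
      rw [hsum, Finset.sum_mul, Finset.sum_mul, ← Finset.sum_sub_distrib]
      exact Finset.sum_congr rfl fun S _ => by ring
    rw [h3] at h2
    linarith
  have h4 := Finset.sum_le_sum fun π (_ : π ∈ (Finset.univ : Finset (Equiv.Perm (Fin n)))) => hmain π
  rw [Finset.sum_sub_distrib, ← Finset.sum_mul, ← Finset.sum_mul] at h4
  refine le_trans ?_ h4
  have h5 : (∑ π : Equiv.Perm (Fin n), patternProb μ π) * (n * (Real.log (2 * k) + 1 + Real.log 2)) ≤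
      1 * (n * (Real.log (2 * k) + 1 + Real.log 2)) := by
    gcongr
  have h6 := mul_le_mul_of_nonneg_right hcard hL
  linarith

lemma entropy_le {n : ℕ} (hn : 3 ≤ n) (μ : Measure (ℝ × ℝ)) [IsProbabilityMeasure μ] :
    samplingEntropy μ n ≤ 2 * (n * Real.log n) := by
  have ht1 : ∑ π : Equiv.Perm (Fin n), patternProb μ π ≤ 1 := by
    have := ENNReal.toReal_mono ENNReal.one_ne_top (sum_E_le (n := n) μ)
    rw [ENNReal.toReal_mul, ENNReal.toReal_sum (fun _ _ => measure_ne_top _ _), Finset.mul_sum] at this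
    simp only [ENNReal.toReal_natCast, ENNReal.toReal_one] at this
    exact this
  have hf : (0 : ℝ) < n.factorial := by positivity
  have h1 : ∀ π : Equiv.Perm (Fin n), Real.negMulLog (patternProb μ π) ≤
      1 / n.factorial + patternProb μ π * Real.log n.factorial := by
    intro π
    set t := patternProb μ π with ht
    have ht0 : 0 ≤ t := by rw [ht, patternProb]; positivity
    rcases ht0.eq_or_lt with h | h
    · rw [← h]; simp
    have h2 := Real.log_le_sub_one_of_pos (x := 1 / (t * n.factorial)) (by positivity)
    rw [one_div, Real.log_inv, Real.log_mul h.ne' hf.ne'] at h2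
    have h3 := mul_le_mul_of_nonneg_left h2 h.le
    have h4 : t * ((t * n.factorial)⁻¹ - 1) = 1 / n.factorial - t := by
      field_simp
    rw [h4] at h3
    rw [Real.negMulLog]
    linarith
  have hlf : Real.log n.factorial ≤ n * Real.log n := by
    rw [← Real.log_pow]
    exact Real.log_le_log hf (by exact_mod_cast Nat.factorial_le_pow n)
  have hlf0 : 0 ≤ Real.log n.factorial := Real.log_natCast_nonneg _
  have hn3 : (3 : ℝ) ≤ n := by exact_mod_cast hn
  have hl1 : 1 ≤ n * Real.log n := by
    have : 1 ≤ Real.log n := by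
      rw [Real.le_log_iff_exp_le (by linarith)]
      linarith [Real.exp_one_lt_d9]
    nlinarith
  calc samplingEntropy μ n ≤ ∑ π : Equiv.Perm (Fin n),
        (1 / n.factorial + patternProb μ π * Real.log n.factorial) :=
        Finset.sum_le_sum fun π _ => h1 π
    _ = 1 + (∑ π : Equiv.Perm (Fin n), patternProb μ π) * Real.log n.factorial := by
        rw [Finset.sum_add_distrib, ← Finset.sum_mul, Finset.sum_const, Finset.card_univ,
          Fintype.card_perm, Fintype.card_fin, nsmul_eq_mul, mul_one_div_cancel hf.ne']
    _ ≤ 1 + 1 * Real.log n.factorial := by gcongr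
    _ ≤ _ := by linarith

lemma isProb {μ : Measure (ℝ × ℝ)} (hμ : IsPermuton μ) : IsProbabilityMeasure μ := by
  refine ⟨?_⟩
  have h := congrArg (fun m : Measure ℝ => m Set.univ) hμ.2.1
  simpa [Measure.map_apply measurable_fst MeasurableSet.univ] using h

lemma le_liminf_of_set {μ : Measure (ℝ × ℝ)} (hμ : IsPermuton μ)
    (A : Set (ℝ × ℝ)) (hA : MeasurableSet A) (k : ℕ) (hk : 1 ≤ k)
    (hK : ∀ s, μ.restrict A s ≤ k *
      ((volume.restrict (Set.Icc (0:ℝ) 1)).prod (volume.restrict (Set.Icc (0:ℝ) 1))) s) :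
    (μ A).toReal ≤ Filter.liminf (fun n : ℕ => samplingEntropy μ n / (n * Real.log n)) atTop := by
  have := isProb hμ
  set C := Real.log (2 * k) + 1 + Real.log 2
  have hlog : Tendsto (fun n : ℕ => Real.log n) atTop atTop :=
    Real.tendsto_log_atTop.comp tendsto_natCast_atTop_atTop
  have hlim : Tendsto (fun n : ℕ => (μ A).toReal - C / Real.log n) atTop (nhds (μ A).toReal) := by
    simpa using tendsto_const_nhds.sub (hlog.const_div_atTop C)
  rw [← hlim.liminf_eq]
  refine liminf_le_liminf ?_ hlim.isBoundedUnder_ge ?_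
  · filter_upwards [eventually_ge_atTop 3] with n hn
    have hD : ∀ᵐ p ∂(Measure.pi (fun _ : Fin n => μ)), ∀ i j : Fin n, i ≠ j →
      (p i).1 ≠ (p j).1 ∧ (p i).2 ≠ (p j).2 := by
      filter_upwards [ae_distinct μ Prod.fst measurable_fst hμ.2.1,
        ae_distinct μ Prod.snd measurable_snd hμ.2.2] with p h1 h2 i j hij
      exact ⟨h1 i j hij, h2 i j hij⟩
    have h := entropy_ge (by omega : 1 ≤ n) μ A hA k hk hK hD
    have hn3 : (3 : ℝ) ≤ n := by exact_mod_cast hn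
    have hl : 0 < Real.log n := Real.log_pos (by linarith)
    rw [le_div_iff₀ (by positivity)]
    refine le_trans (le_of_eq ?_) h
    field_simp
    try ring
  · apply IsBoundedUnder.isCoboundedUnder_ge
    refine isBoundedUnder_of_eventually_le (a := 2) ?_
    filter_upwards [eventually_ge_atTop 3] with n hn
    have hn3 : (3 : ℝ) ≤ n := by exact_mod_cast hn
    have hl : 0 < Real.log n := Real.log_pos (by linarith)
    rw [div_le_iff₀ (by positivity)]
    exact entropy_le hn μ

lemma main_bound {μ : Measure (ℝ × ℝ)} (hμ : IsPermuton μ) :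
    ((volume.withDensity (μ.rnDeriv volume)) Set.univ).toReal ≤
      Filter.liminf (fun n : ℕ => samplingEntropy μ n / (n * Real.log n)) atTop := by
  have := isProb hμ
  set f := μ.rnDeriv volume with hf
  set ac := (volume : Measure (ℝ × ℝ)).withDensity f with hac
  have hfm : Measurable f := Measure.measurable_rnDeriv _ _
  obtain ⟨Z, hZm, hZ1, hZ2⟩ := Measure.mutuallySingular_singularPart μ (volume : Measure (ℝ × ℝ))
  -- `singularPart` vanishes on `Z`, volume vanishes on `Zᶜ`
  set Q : Set (ℝ × ℝ) := Set.Icc (0:ℝ) 1 ×ˢ Set.Icc (0:ℝ) 1 with hQ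
  have hQm : MeasurableSet Q := measurableSet_Icc.prod measurableSet_Icc
  have hacle : ac ≤ μ := Measure.withDensity_rnDeriv_le μ volume
  let A : ℕ → Set (ℝ × ℝ) := fun k => Z ∩ Q ∩ {x | f x ≤ (k + 1 : ℕ)}
  have hAm : ∀ k, MeasurableSet (A k) := fun k =>
    (hZm.inter hQm).inter (measurableSet_le hfm measurable_const)
  have hμA : ∀ k s, MeasurableSet s → μ (s ∩ A k) = ac (s ∩ A k) := by
    intro k s hs
    conv_lhs => rw [← Measure.singularPart_add_rnDeriv μ (volume : Measure (ℝ × ℝ))]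
    rw [Measure.add_apply, measure_mono_null _ hZ1, zero_add]
    exact fun x hx => hx.2.1.1
  have hvol : (volume.restrict (Set.Icc (0:ℝ) 1)).prod (volume.restrict (Set.Icc (0:ℝ) 1)) =
      (volume : Measure (ℝ × ℝ)).restrict Q := by
    rw [Measure.prod_restrict]; rfl
  have hlow : ∀ k, (μ (A k)).toReal ≤
      Filter.liminf (fun n : ℕ => samplingEntropy μ n / (n * Real.log n)) atTop := by
    intro k
    refine le_liminf_of_set hμ (A k) (hAm k) (k + 1) (by omega) ?_
    rw [hvol]
    have hle : μ.restrict (A k) ≤ ((k + 1 : ℕ) : ENNReal) • (volume : Measure (ℝ × ℝ)).restrict Q := by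
      refine Measure.le_iff.2 fun s hs => ?_
      rw [Measure.restrict_apply hs, hμA k s hs, hac, withDensity_apply _ (hs.inter (hAm k))]
      calc ∫⁻ x in s ∩ A k, f x ≤ ∫⁻ x in s ∩ A k, ((k + 1 : ℕ) : ENNReal) :=
            setLIntegral_mono measurable_const fun x hx => hx.2.2
        _ = ((k + 1 : ℕ) : ENNReal) * volume (s ∩ A k) := setLIntegral_const _ _
        _ ≤ ((k + 1 : ℕ) : ENNReal) * volume (s ∩ Q) := by
            gcongr
            exact fun x hx => hx.1.2
        _ = _ := by simp [Measure.restrict_apply hs]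
    intro s
    exact hle s
  have hmono : Monotone A := by
    intro a b hab x hx
    refine ⟨hx.1, le_trans (show f x ≤ _ from hx.2) ?_⟩
    exact_mod_cast Nat.succ_le_succ hab
  have htend := tendsto_measure_iUnion_atTop (μ := ac) hmono
  have hU : ac (⋃ k, A k) = ac Set.univ := by
    apply measure_congr
    have h1 : ∀ᵐ x ∂ac, x ∈ Z := by
      refine (withDensity_absolutelyContinuous volume f).ae_le ?_
      rw [mem_ae_iff]
      exact hZ2
    have h2 : ∀ᵐ x ∂ac, x ∈ Q := by
      rw [ae_iff]
      exact le_antisymm ((hacle _).trans hμ.1.le) zero_le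
    have h3 : ∀ᵐ x ∂ac, f x < ⊤ :=
      (withDensity_absolutelyContinuous volume f).ae_le (Measure.rnDeriv_lt_top μ volume)
    rw [ae_eq_univ, ← mem_ae_iff]
    filter_upwards [h1, h2, h3] with x hx1 hx2 hx3
    obtain ⟨k, hk⟩ := ENNReal.exists_nat_gt hx3.ne
    have hk' : f x ≤ ((k + 1 : ℕ) : ENNReal) := hk.le.trans (by exact_mod_cast Nat.le_succ k)
    exact Set.mem_iUnion.2 ⟨k, ⟨hx1, hx2⟩, hk'⟩
  rw [hU] at htend
  have hfin : ac Set.univ ≠ ⊤ := ((hacle _).trans_lt (measure_lt_top μ _)).ne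
  have ht2 := (ENNReal.tendsto_toReal hfin).comp htend
  refine le_of_tendsto' ht2 fun k => ?_
  refine le_trans ?_ (hlow k)
  exact ENNReal.toReal_mono (measure_ne_top _ _) (hacle _)

end PermEnt

/-- For a permuton μ with absolutely continuous part μ_ac (in the Lebesgue decomposition
with respect to 2-dimensional Lebesgue measure),
liminf H_n(μ)/(n log n) ≥ ‖μ_ac‖. -/
theorem liminf_samplingEntropy_ge_acPart_mass
    (μ : Measure (ℝ × ℝ)) (hμ : IsPermuton μ) :
    ((volume.withDensity (μ.rnDeriv volume)) Set.univ).toReal ≤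
      Filter.liminf (fun n : ℕ => samplingEntropy μ n / (n * Real.log n)) atTop := by
  exact PermEnt.main_bound hμ
end

section
/- Let f : [0,1] → [0,1] be a Borel map preserving Lebesgue measure, and suppose there exist finitely many points 0 = x_0 < x_1 < … < x_k = 1 such that f is continuously differentiable on each open interval (x_{i−1}, x_i). Then lim_{n→∞} H_n(μ_f)/n = ∫₀¹ log|f'(x)| dx. (Since f preserves Lebesgue measure, |f'| ≥ 1 almost everywhere, so the integrand is nonnegative and the integral is well defined in [0, +∞]; if the integral is +∞, the conclusion is that H_n(μ_f)/n → +∞.) -/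
open MeasureTheory Filter

/-- The permuton associated with a Lebesgue-measure-preserving map f : [0,1] → [0,1]:
the pushforward of Lebesgue measure on [0,1] under x ↦ (x, f x). -/
noncomputable def graphPermuton (f : ℝ → ℝ) : Measure (ℝ × ℝ) :=
  Measure.map (fun t => (t, f t)) (volume.restrict (Set.Icc (0:ℝ) 1))

namespace PermEnt

open Set

/-- Lebesgue measure on the unit interval. -/
noncomputable abbrev lam : Measure ℝ := volume.restrict (Set.Icc (0:ℝ) 1)

instance lam_prob : IsProbabilityMeasure lam :=
  ⟨by simp [lam]⟩

/-- The product of `n` copies of Lebesgue measure on the unit interval. -/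
noncomputable abbrev cube (n : ℕ) : Measure (Fin n → ℝ) := Measure.pi fun _ : Fin n => lam

lemma perm_eq_of_strictMono_comp {n : ℕ} {x : Fin n → ℝ} {σ τ : Equiv.Perm (Fin n)}
    (hs : StrictMono (x ∘ σ)) (ht : StrictMono (x ∘ τ)) : σ = τ := by
  have h := Tuple.unique_monotone hs.monotone ht.monotone
  have hinj : Function.Injective x := by
    have := hs.injective
    exact (Equiv.injective_comp σ x).1 this
  ext i
  have := congrFun h i
  exact congrArg _ (hinj this)

lemma strictMono_comp_sort {n : ℕ} {x : Fin n → ℝ} (hx : Function.Injective x) :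
    StrictMono (x ∘ Tuple.sort x) :=
  (Tuple.monotone_sort x).strictMono_of_injective (hx.comp (Equiv.injective _))

lemma measurableSet_strictMono_comp {n : ℕ} (σ : Equiv.Perm (Fin n)) :
    MeasurableSet {x : Fin n → ℝ | StrictMono (x ∘ σ)} := by
  have : {x : Fin n → ℝ | StrictMono (x ∘ σ)} =
      ⋂ i : Fin n, ⋂ j : Fin n, ⋂ _ : i < j, {x | x (σ i) < x (σ j)} := by
    ext x; simp [StrictMono]
  rw [this]
  refine MeasurableSet.iInter fun i => MeasurableSet.iInter fun j => MeasurableSet.iInter fun _ => ?_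
  exact measurableSet_lt (measurable_pi_apply _) (measurable_pi_apply _)

lemma ae_injective (n : ℕ) : ∀ᵐ x ∂(cube n), Function.Injective x := by
  have hac : cube n ≪ (volume : Measure (Fin n → ℝ)) := by
    have : cube n = (volume : Measure (Fin n → ℝ)).restrict
        (Set.univ.pi fun _ => Set.Icc (0:ℝ) 1) := by
      rw [volume_pi, Measure.restrict_pi_pi]
    rw [this]
    exact Measure.absolutelyContinuous_of_le Measure.restrict_le_self
  apply hac.ae_le
  have : ∀ i j : Fin n, i ≠ j → ∀ᵐ x : Fin n → ℝ, x i ≠ x j := by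
    intro i j hij
    let s : Submodule ℝ (Fin n → ℝ) :=
      LinearMap.ker ((LinearMap.proj i : (Fin n → ℝ) →ₗ[ℝ] ℝ) - LinearMap.proj j)
    have hs : s ≠ ⊤ := by
      intro h
      have : (Pi.single i 1 : Fin n → ℝ) ∈ s := by rw [h]; trivial
      simp [s, LinearMap.mem_ker, hij.symm] at this
    have := Measure.addHaar_submodule (volume : Measure (Fin n → ℝ)) s hs
    rw [ae_iff]
    convert this using 2
    ext x; simp [s, LinearMap.mem_ker, sub_eq_zero]
  have h2 : ∀ᵐ x : Fin n → ℝ, ∀ i j : Fin n, i ≠ j → x i ≠ x j := by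
    rw [ae_all_iff]; intro i; rw [ae_all_iff]; intro j
    by_cases hij : i = j
    · simp [hij]
    · filter_upwards [this i j hij] with x hx _ using hx
  filter_upwards [h2] with x hx i j hij
  by_contra h
  exact hx i j h hij

lemma measurePreserving_perm {n : ℕ} (σ : Equiv.Perm (Fin n)) :
    MeasurePreserving (fun x : Fin n → ℝ => x ∘ σ) (cube n) (cube n) := by
  have h := measurePreserving_piCongrLeft (fun _ : Fin n => lam) σ.symm
  convert h using 1
  ext x i
  simp [MeasurableEquiv.piCongrLeft, Equiv.piCongrLeft, Equiv.piCongrLeft']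

/-- A symmetric integral over the cube is `n!` times the integral over sorted tuples. -/
lemma lintegral_symm {n : ℕ} (F : (Fin n → ℝ) → ENNReal)
    (hsymm : ∀ (σ : Equiv.Perm (Fin n)) x, F (x ∘ σ) = F x) :
    ∫⁻ x, F x ∂(cube n) = n.factorial * ∫⁻ x in {x | StrictMono x}, F x ∂(cube n) := by
  have hcover : (⋃ σ : Equiv.Perm (Fin n), {x : Fin n → ℝ | StrictMono (x ∘ σ)})
      =ᵐ[cube n] Set.univ := by
    rw [eventuallyEq_univ]
    filter_upwards [ae_injective n] with x hx
    exact Set.mem_iUnion.2 ⟨Tuple.sort x, strictMono_comp_sort hx⟩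
  rw [← setLIntegral_univ, ← setLIntegral_congr hcover, lintegral_iUnion
    (fun σ => measurableSet_strictMono_comp σ)]
  · have : ∀ σ : Equiv.Perm (Fin n), ∫⁻ x in {x | StrictMono (x ∘ σ)}, F x ∂(cube n) =
        ∫⁻ x in {x | StrictMono x}, F x ∂(cube n) := by
      intro σ
      have hm := measurePreserving_perm σ
      have he : MeasurableEmbedding (fun x : Fin n → ℝ => x ∘ σ) := by
        have h := (MeasurableEquiv.piCongrLeft (fun _ : Fin n => ℝ) σ.symm).measurableEmbedding
        convert h using 1
        ext x i
        simp [MeasurableEquiv.piCongrLeft, Equiv.piCongrLeft, Equiv.piCongrLeft']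
      rw [← hm.setLIntegral_comp_preimage_emb he F {x | StrictMono x}]
      simp only [hsymm]
      rfl
    simp only [this, tsum_fintype, Finset.sum_const, Finset.card_univ, Fintype.card_perm,
      Fintype.card_fin, nsmul_eq_mul]
  · intro σ τ hne
    rw [Function.onFun, Set.disjoint_left]
    intro x h1 h2
    exact hne (perm_eq_of_strictMono_comp h1 h2)

lemma factorial_mul_cube_strictMono (n : ℕ) :
    (n.factorial : ENNReal) * cube n {x | StrictMono x} = 1 := by
  have := lintegral_symm (n := n) (fun _ => 1) (by simp)
  simpa using this.symm

/-- Tuples whose order pattern is `π`. -/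
def pat {n : ℕ} (π : Equiv.Perm (Fin n)) : Set (Fin n → ℝ) :=
  {y | ∀ i j : Fin n, i < j → (y i < y j ↔ π i < π j)}

lemma measurableSet_pat {n : ℕ} (π : Equiv.Perm (Fin n)) : MeasurableSet (pat π) := by
  have : pat π = ⋂ i : Fin n, ⋂ j : Fin n, ⋂ _ : i < j, {y : Fin n → ℝ | y i < y j ↔ π i < π j} := by
    ext x; simp [pat]
  rw [this]
  refine MeasurableSet.iInter fun i => MeasurableSet.iInter fun j => MeasurableSet.iInter fun _ => ?_
  have h : MeasurableSet {y : Fin n → ℝ | y i < y j} :=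
    measurableSet_lt (measurable_pi_apply _) (measurable_pi_apply _)
  by_cases hp : π i < π j
  · simpa [hp] using h
  · have := h.compl
    convert this using 1
    ext y; simp [hp]

lemma mem_pat_iff {n : ℕ} (π : Equiv.Perm (Fin n)) {y : Fin n → ℝ} (hy : Function.Injective y) :
    y ∈ pat π ↔ StrictMono (y ∘ π.symm) := by
  constructor
  · intro h i j hij
    have hne : π.symm i ≠ π.symm j := fun h => hij.ne (π.symm.injective h)
    rcases lt_or_gt_of_ne hne with h1 | h1
    · exact (h _ _ h1).2 (by simpa using hij)
    · have h2 := (not_congr (h _ _ h1)).2 (by simpa using hij.le)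
      exact lt_of_le_of_ne (not_lt.1 h2) (fun he => hne (hy he))
  · intro h i j _
    have := h.lt_iff_lt (a := π i) (b := π j)
    simpa using this

lemma cube_pat {n : ℕ} (π : Equiv.Perm (Fin n)) :
    (n.factorial : ENNReal) * cube n (pat π) = 1 := by
  rw [← factorial_mul_cube_strictMono n]
  congr 1
  have h1 : (pat π : Set (Fin n → ℝ)) =ᵐ[cube n] {y | StrictMono (y ∘ π.symm)} := by
    filter_upwards [ae_injective n] with y hy
    exact propext (mem_pat_iff π hy)
  rw [measure_congr h1]
  have := (measurePreserving_perm π.symm).measure_preimage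
    (s := {x : Fin n → ℝ | StrictMono x})
    (measurableSet_strictMono_comp (Equiv.refl _)).nullMeasurableSet
  exact this

/-- Number of monotone words is polynomially bounded. -/
lemma card_monotone_le (n m : ℕ) :
    (Finset.univ.filter fun c : Fin n → Fin m => Monotone c).card ≤ (n + 1) ^ m := by
  classical
  have : ((n + 1) ^ m) = (Finset.univ : Finset (Fin m → Fin (n+1))).card := by simp
  rw [this]
  refine Finset.card_le_card_of_injOn
    (fun c j => ⟨(Finset.univ.filter fun i => c i ≤ j).card, ?_⟩) (by simp) ?_
  · have := Finset.card_le_univ (Finset.univ.filter fun i => c i ≤ j)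
    simp at this
    simpa [Nat.lt_succ_iff] using this
  · intro c hc d hd hcd
    simp at hc hd
    have key : ∀ (e : Fin n → Fin m), Monotone e → ∀ i j, e i ≤ j ↔
        (i : ℕ) < (Finset.univ.filter fun i => e i ≤ j).card := by
      intro e he i j
      have h := Tuple.lt_card_le_iff_apply_le_of_monotone (f := e) (a := j) (j := i) he
      exact h.symm
    funext i
    have h : ∀ j, c i ≤ j ↔ d i ≤ j := by
      intro j
      rw [key c hc, key d hd]
      have := congrArg Fin.val (congrFun hcd j)
      simp only at this
      rw [this]
    exact le_antisymm ((h _).2 le_rfl) ((h _).1 le_rfl)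

end PermEnt
namespace PermEnt

open Set

/-- The data about a piecewise monotone measure preserving map which the entropy estimates use. -/
structure Core {k : ℕ} (f : ℝ → ℝ) (lab : ℝ → Fin k) (G : ℝ → ℝ) (Gd : Set ℝ) : Prop where
  hf : Measurable f
  hlab : Measurable lab
  hG : Measurable G
  hG1 : ∀ t, 1 ≤ G t
  hGd : MeasurableSet Gd
  hae : ∀ᵐ t ∂lam, t ∈ Gd
  hmp : Measure.map f lam = lam
  hmono : ∀ s ∈ Gd, ∀ t ∈ Gd, s < t → lab s ≤ lab t
  hpiece : ∀ i, StrictMonoOn f (Gd ∩ lab ⁻¹' {i}) ∨ StrictAntiOn f (Gd ∩ lab ⁻¹' {i})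
  hvol : ∀ i, Measure.map f (lam.withDensity
    ((Gd ∩ lab ⁻¹' {i}).indicator fun t => ENNReal.ofReal (G t))) ≤ lam

/-- Sorted tuples `x` for which `f ∘ x` has pattern `π`. -/
def patSet {n : ℕ} (f : ℝ → ℝ) (π : Equiv.Perm (Fin n)) : Set (Fin n → ℝ) :=
  {x | StrictMono x} ∩ (fun x i => f (x i)) ⁻¹' pat π

lemma measurableSet_patSet {n : ℕ} {f : ℝ → ℝ} (hf : Measurable f) (π : Equiv.Perm (Fin n)) :
    MeasurableSet (patSet f π) :=
  (measurableSet_strictMono_comp (Equiv.refl _)).inter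
    ((measurableSet_pat π).preimage (measurable_pi_lambda _ fun i => hf.comp (measurable_pi_apply i)))

lemma patternProb_graph {n : ℕ} {f : ℝ → ℝ} (hf : Measurable f) (π : Equiv.Perm (Fin n)) :
    patternProb (graphPermuton f) π = n.factorial * (cube n (patSet f π)).toReal := by
  unfold patternProb graphPermuton
  have hm : Measurable fun t : ℝ => (t, f t) := measurable_id.prodMk hf
  have : IsProbabilityMeasure (Measure.map (fun t : ℝ => (t, f t)) lam) :=
    Measure.isProbabilityMeasure_map hm.aemeasurable
  have h : (Measure.pi fun _ : Fin n => Measure.map (fun t : ℝ => (t, f t)) lam) =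
      (cube n).map (fun x i => (x i, f (x i))) :=
    (Measure.pi_map_pi (μ := fun _ : Fin n => lam) (f := fun _ t => (t, f t))
      (fun _ => hm.aemeasurable)).symm
  change _ * ((Measure.pi fun _ : Fin n => Measure.map (fun t : ℝ => (t, f t)) lam) _).toReal = _
  have hm2 : Measurable fun (x : Fin n → ℝ) i => (x i, f (x i)) :=
    measurable_pi_lambda _ fun i => hm.comp (measurable_pi_apply i)
  rw [h, Measure.map_apply hm2]
  · congr 3
    ext x
    simp only [patSet, pat, Set.mem_preimage, Set.mem_setOf_eq, Set.mem_inter_iff]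
    constructor
    · intro h
      exact ⟨fun i j hij => (h i j hij).1, fun i j hij => (h i j hij).2⟩
    · rintro ⟨h1, h2⟩ i j hij
      exact ⟨h1 hij, h2 i j hij⟩
  · have : {p : Fin n → ℝ × ℝ | ∀ i j : Fin n, i < j →
        (p i).1 < (p j).1 ∧ ((p i).2 < (p j).2 ↔ π i < π j)} =
        (fun p i => (p i).1) ⁻¹' {x | StrictMono (x ∘ Equiv.refl _)} ∩
          (fun p i => (p i).2) ⁻¹' pat π := by
      ext p
      simp only [pat, Set.mem_preimage, Set.mem_setOf_eq, Set.mem_inter_iff]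
      constructor
      · intro h
        exact ⟨fun i j hij => (h i j hij).1, fun i j hij => (h i j hij).2⟩
      · rintro ⟨h1, h2⟩ i j hij
        exact ⟨h1 hij, h2 i j hij⟩
    rw [this]
    refine ((measurableSet_strictMono_comp (Equiv.refl _)).preimage ?_).inter
      ((measurableSet_pat π).preimage ?_)
    · exact measurable_pi_lambda _ fun i => measurable_fst.comp (measurable_pi_apply i)
    · exact measurable_pi_lambda _ fun i => measurable_snd.comp (measurable_pi_apply i)

section
variable {k : ℕ} {f : ℝ → ℝ} {lab : ℝ → Fin k} {G : ℝ → ℝ} {Gd : Set ℝ}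

lemma Core.ae_inj (h : Core f lab G Gd) (n : ℕ) :
    ∀ᵐ x ∂(cube n), Function.Injective fun i => f (x i) := by
  have hm : MeasurePreserving f lam lam := ⟨h.hf, h.hmp⟩
  have hp : MeasurePreserving (fun (x : Fin n → ℝ) i => f (x i)) (cube n) (cube n) :=
    measurePreserving_pi _ _ fun _ => hm
  exact hp.quasiMeasurePreserving.ae (ae_injective n)

lemma Core.ae_good (h : Core f lab G Gd) (n : ℕ) : ∀ᵐ x ∂(cube n), ∀ i, x i ∈ Gd := by
  rw [ae_all_iff]
  intro i
  exact (measurePreserving_eval (fun _ : Fin n => lam) i).quasiMeasurePreserving.ae h.hae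

lemma Core.sum_lintegral (h : Core f lab G Gd) {n : ℕ} (F : (Fin n → ℝ) → ENNReal)
    (hsymm : ∀ (σ : Equiv.Perm (Fin n)) x, F (x ∘ σ) = F x) :
    ∑ π : Equiv.Perm (Fin n), n.factorial * ∫⁻ x in patSet f π, F x ∂(cube n) =
      ∫⁻ x, F x ∂(cube n) := by
  rw [lintegral_symm F hsymm, ← Finset.mul_sum]
  congr 1
  have hcover : (⋃ π : Equiv.Perm (Fin n), patSet f π) =ᵐ[cube n] {x | StrictMono x} := by
    filter_upwards [h.ae_inj n] with x hx
    refine propext ⟨fun hh => ?_, fun hh => ?_⟩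
    · obtain ⟨π, hπ⟩ := Set.mem_iUnion.1 hh
      exact hπ.1
    · refine Set.mem_iUnion.2 ⟨(Tuple.sort fun i => f (x i)).symm, hh, ?_⟩
      exact (mem_pat_iff _ hx).2 (strictMono_comp_sort hx)
  rw [← setLIntegral_congr hcover, lintegral_iUnion₀
    (fun π => (measurableSet_patSet h.hf π).nullMeasurableSet), tsum_fintype]
  intro π π' hne
  refine measure_mono_null ?_ (h.ae_inj n)
  intro x hx hinj
  have h1 := (mem_pat_iff _ hinj).1 hx.1.2
  have h2 := (mem_pat_iff _ hinj).1 hx.2.2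
  have := perm_eq_of_strictMono_comp h1 h2
  exact hne (Equiv.symm_bijective.injective this)

lemma lintegral_cube_sum {n : ℕ} (φ : ℝ → ENNReal) (hφ : Measurable φ) :
    ∫⁻ x, ∑ i, φ (x i) ∂(cube n) = n * ∫⁻ t, φ t ∂lam := by
  rw [lintegral_finsetSum (f := fun (i : Fin n) (x : Fin n → ℝ) => φ (x i)) _
    fun i _ => hφ.comp (measurable_pi_apply i)]
  have : ∀ i : Fin n, ∫⁻ x, φ (x i) ∂(cube n) = ∫⁻ t, φ t ∂lam := fun i =>
    (measurePreserving_eval (fun _ : Fin n => lam) i).lintegral_comp hφ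
  simp [this]

lemma pi_withDensity_eq {n : ℕ} (φ : Fin n → ℝ → ENNReal) (hφ : ∀ i, Measurable (φ i))
    [∀ i, SigmaFinite (lam.withDensity (φ i))] :
    (Measure.pi fun i => lam.withDensity (φ i)) =
      (cube n).withDensity fun x => ∏ i, φ i (x i) := by
  refine Measure.pi_eq fun s hs => ?_
  rw [withDensity_apply _ (MeasurableSet.univ_pi hs), ← lintegral_indicator (MeasurableSet.univ_pi hs)]
  have h1 : ∀ x : Fin n → ℝ, (Set.univ.pi s).indicator (fun x => ∏ i, φ i (x i)) x =
      ∏ i, (s i).indicator (φ i) (x i) := by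
    intro x
    by_cases hx : x ∈ Set.univ.pi s
    · rw [Set.indicator_of_mem hx]
      exact Finset.prod_congr rfl fun i _ => (Set.indicator_of_mem (hx i trivial) _).symm
    · rw [Set.indicator_of_notMem hx]
      simp only [Set.mem_univ_pi, not_forall] at hx
      obtain ⟨i, hi⟩ := hx
      exact (Finset.prod_eq_zero (Finset.mem_univ i) (Set.indicator_of_notMem hi _)).symm
  simp only [h1]
  have hind : ProbabilityTheory.iIndepFun (fun i (x : Fin n → ℝ) => (s i).indicator (φ i) (x i))
      (cube n) :=
    ProbabilityTheory.iIndepFun_pi (μ := fun _ : Fin n => lam)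
      (X := fun i => (s i).indicator (φ i)) fun i => ((hφ i).indicator (hs i)).aemeasurable
  rw [ProbabilityTheory.lintegral_prod_eq_prod_lintegral_of_indepFun Finset.univ _ hind
    (fun i => ((hφ i).indicator (hs i)).comp (measurable_pi_apply i))]
  refine Finset.prod_congr rfl fun i _ => ?_
  rw [(measurePreserving_eval (fun _ : Fin n => lam) i).lintegral_comp ((hφ i).indicator (hs i)),
    lintegral_indicator (hs i), withDensity_apply _ (hs i)]

lemma pi_le_pi {n : ℕ} (μ ν : Fin n → Measure ℝ) [∀ i, SigmaFinite (μ i)] (hle : ∀ i, μ i ≤ ν i) :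
    Measure.pi μ ≤ Measure.pi ν := by
  have h : OuterMeasure.pi (fun i => (μ i).toOuterMeasure) ≤
      OuterMeasure.pi (fun i => (ν i).toOuterMeasure) := by
    rw [OuterMeasure.le_pi]
    intro s _
    refine (OuterMeasure.pi_pi_le _ _).trans (Finset.prod_le_prod' fun i _ => hle i (s i))
  intro s
  refine (Measure.le_iff.2 fun s hs => ?_ : Measure.pi μ ≤ Measure.pi ν) s
  rw [Measure.pi_def, Measure.pi_def, toMeasure_apply _ _ hs, toMeasure_apply _ _ hs]
  exact h s

lemma Core.lintegral_G_le (h : Core f lab G Gd) {n : ℕ} (π : Equiv.Perm (Fin n)) :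
    n.factorial * ∫⁻ x in patSet f π, ∏ i, ENNReal.ofReal (G (x i)) ∂(cube n) ≤
      ((n + 1 : ℕ) : ENNReal) ^ k := by
  classical
  set φ : Fin k → ℝ → ENNReal := fun a =>
    (Gd ∩ lab ⁻¹' {a}).indicator fun t => ENNReal.ofReal (G t) with hφdef
  have hφ : ∀ a, Measurable (φ a) := fun a =>
    h.hG.ennreal_ofReal.indicator (h.hGd.inter (h.hlab (measurableSet_singleton a)))
  have hfin : ∀ a, IsFiniteMeasure (lam.withDensity (φ a)) := fun a => by
    refine ⟨?_⟩
    have := h.hvol a Set.univ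
    rw [Measure.map_apply h.hf MeasurableSet.univ, Set.preimage_univ] at this
    exact this.trans_lt (measure_lt_top _ _)
  have hfm : Measurable (fun (x : Fin n → ℝ) i => f (x i)) :=
    measurable_pi_lambda _ fun i => h.hf.comp (measurable_pi_apply i)
  have hA : MeasurableSet ((fun (x : Fin n → ℝ) i => f (x i)) ⁻¹' pat π) :=
    (measurableSet_pat π).preimage hfm
  have hbound : ∀ a : Fin n → Fin k,
      ∫⁻ x in (fun (x : Fin n → ℝ) i => f (x i)) ⁻¹' pat π, ∏ i, φ (a i) (x i) ∂(cube n) ≤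
        cube n (pat π) := by
    intro a
    have : ∀ i, SigmaFinite (Measure.map f (lam.withDensity (φ (a i)))) := fun i => by
      have := hfin (a i)
      infer_instance
    rw [← withDensity_apply _ hA, ← pi_withDensity_eq (fun i => φ (a i)) (fun i => hφ _),
      ← Measure.map_apply hfm (measurableSet_pat π),
      Measure.pi_map_pi (f := fun _ => f) (fun _ => h.hf.aemeasurable)]
    exact pi_le_pi _ _ (fun i => h.hvol (a i)) _
  have hle : ∫⁻ x in patSet f π, ∏ i, ENNReal.ofReal (G (x i)) ∂(cube n) ≤
      ∑ a ∈ Finset.univ.filter (fun c : Fin n → Fin k => Monotone c), cube n (pat π) := by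
    calc ∫⁻ x in patSet f π, ∏ i, ENNReal.ofReal (G (x i)) ∂(cube n)
        ≤ ∫⁻ x in patSet f π, ∑ a ∈ Finset.univ.filter (fun c : Fin n → Fin k => Monotone c),
            ∏ i, φ (a i) (x i) ∂(cube n) := by
          refine setLIntegral_mono_ae' (measurableSet_patSet h.hf π) ?_
          filter_upwards [h.ae_good n] with x hx hxS
          have hmon : Monotone fun i => lab (x i) := by
            intro i j hij
            rcases hij.eq_or_lt with rfl | hlt
            · exact le_rfl
            · exact h.hmono _ (hx i) _ (hx j) (hxS.1 hlt)
          have : ∏ i, ENNReal.ofReal (G (x i)) = ∏ i, φ (lab (x i)) (x i) := by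
            refine Finset.prod_congr rfl fun i _ => ?_
            simp only [hφdef]
            rw [Set.indicator_of_mem]
            exact ⟨hx i, rfl⟩
          rw [this]
          exact Finset.single_le_sum (f := fun a : Fin n → Fin k => ∏ i, φ (a i) (x i))
            (fun _ _ => zero_le) (Finset.mem_filter.2 ⟨Finset.mem_univ _, hmon⟩)
      _ ≤ ∫⁻ x in (fun (x : Fin n → ℝ) i => f (x i)) ⁻¹' pat π,
            ∑ a ∈ Finset.univ.filter (fun c : Fin n → Fin k => Monotone c),
            ∏ i, φ (a i) (x i) ∂(cube n) := lintegral_mono_set Set.inter_subset_right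
      _ = ∑ a ∈ Finset.univ.filter (fun c : Fin n → Fin k => Monotone c),
            ∫⁻ x in (fun (x : Fin n → ℝ) i => f (x i)) ⁻¹' pat π,
            ∏ i, φ (a i) (x i) ∂(cube n) := by
          refine lintegral_finsetSum _ fun a _ => ?_
          exact Finset.measurable_fun_prod _ fun i _ => (hφ _).comp (measurable_pi_apply i)
      _ ≤ _ := Finset.sum_le_sum fun a _ => hbound a
  calc _ ≤ (n.factorial : ENNReal) * ∑ a ∈ Finset.univ.filter
          (fun c : Fin n → Fin k => Monotone c), cube n (pat π) := by gcongr
    _ = ((Finset.univ.filter (fun c : Fin n → Fin k => Monotone c)).card : ENNReal) *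
          (n.factorial * cube n (pat π)) := by
        rw [Finset.sum_const, nsmul_eq_mul]; ring
    _ = ((Finset.univ.filter (fun c : Fin n → Fin k => Monotone c)).card : ENNReal) := by
        rw [cube_pat, mul_one]
    _ ≤ _ := by
        have := card_monotone_le n k
        calc _ ≤ (((n+1)^k : ℕ) : ENNReal) := by exact_mod_cast (by convert this)
          _ = _ := by push_cast; rfl

end

end PermEnt
namespace PermEnt

open Set

section
variable {k : ℕ} {f : ℝ → ℝ} {lab : ℝ → Fin k} {G : ℝ → ℝ} {Gd : Set ℝ}

lemma ofReal_patternProb {n : ℕ} (hf : Measurable f) (π : Equiv.Perm (Fin n)) :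
    ENNReal.ofReal (patternProb (graphPermuton f) π) = n.factorial * cube n (patSet f π) := by
  rw [patternProb_graph hf, ENNReal.ofReal_mul (by positivity), ENNReal.ofReal_natCast,
    ENNReal.ofReal_toReal (measure_ne_top _ _)]

lemma patternProb_nonneg' {n : ℕ} (μ : Measure (ℝ × ℝ)) (π : Equiv.Perm (Fin n)) :
    0 ≤ patternProb μ π := by
  unfold patternProb; positivity

lemma Core.sum_ofReal_patternProb (h : Core f lab G Gd) (n : ℕ) :
    ∑ π : Equiv.Perm (Fin n), ENNReal.ofReal (patternProb (graphPermuton f) π) = 1 := by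
  have := h.sum_lintegral (n := n) (fun _ => 1) (by simp)
  simp only [ofReal_patternProb h.hf]
  simpa using this

lemma Core.sum_patternProb (h : Core f lab G Gd) (n : ℕ) :
    ∑ π : Equiv.Perm (Fin n), patternProb (graphPermuton f) π = 1 := by
  have := h.sum_ofReal_patternProb n
  rw [← ENNReal.ofReal_sum_of_nonneg fun π _ => patternProb_nonneg' _ _] at this
  rwa [ENNReal.ofReal_eq_one] at this

lemma Core.patternProb_le_one (h : Core f lab G Gd) {n : ℕ} (π : Equiv.Perm (Fin n)) :
    patternProb (graphPermuton f) π ≤ 1 := by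
  rw [← h.sum_patternProb n]
  exact Finset.single_le_sum (f := fun π => patternProb (graphPermuton f) π)
    (fun π _ => patternProb_nonneg' _ π) (Finset.mem_univ π)

lemma log_le_aux {u c : ℝ} (hu : 0 < u) (hc : 0 < c) :
    Real.log u + 1 ≤ u / c + Real.log c := by
  have := Real.log_le_sub_one_of_pos (div_pos hu hc)
  rw [Real.log_div hu.ne' hc.ne'] at this
  linarith

/-- The lower bound for the sampling entropy. -/
theorem Core.lower (h : Core f lab G Gd) (n : ℕ) :
    n * ∫⁻ t, ENNReal.ofReal (Real.log (G t)) ∂lam ≤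
      ENNReal.ofReal (samplingEntropy (graphPermuton f) n + k * Real.log (n + 1)) := by
  have hGpos : ∀ t, 0 < G t := fun t => zero_lt_one.trans_le (h.hG1 t)
  have hlogm : Measurable fun t => ENNReal.ofReal (Real.log (G t)) :=
    (Real.measurable_log.comp h.hG).ennreal_ofReal
  have hlogn : 0 ≤ Real.log ((n : ℝ) + 1) := Real.log_nonneg (by linarith [n.cast_nonneg (α := ℝ)])
  set F : (Fin n → ℝ) → ENNReal := fun x => ∑ i, ENNReal.ofReal (Real.log (G (x i))) with hF
  have hFm : Measurable F := Finset.measurable_fun_sum _ fun i _ => hlogm.comp (measurable_pi_apply i)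
  have hFeq : ∀ x, F x = ENNReal.ofReal (Real.log (∏ i, G (x i))) := by
    intro x
    rw [Real.log_prod fun i _ => (hGpos _).ne',
      ENNReal.ofReal_sum_of_nonneg fun i _ => Real.log_nonneg (h.hG1 _)]
  have key : ∀ π : Equiv.Perm (Fin n),
      n.factorial * ∫⁻ x in patSet f π, F x ∂(cube n) ≤
        ENNReal.ofReal (Real.negMulLog (patternProb (graphPermuton f) π) +
          patternProb (graphPermuton f) π * (k * Real.log (n + 1))) := by
    intro π
    set t := patternProb (graphPermuton f) π with ht
    have htn : (n.factorial : ENNReal) * cube n (patSet f π) = ENNReal.ofReal t :=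
      (ofReal_patternProb h.hf π).symm
    have ht0 : 0 ≤ t := patternProb_nonneg' _ _
    have ht1 : t ≤ 1 := h.patternProb_le_one π
    rcases ht0.eq_or_lt with h0 | hpos
    · have : cube n (patSet f π) = 0 := by
        rw [← h0] at htn
        simp only [ENNReal.ofReal_zero, mul_eq_zero, Nat.cast_eq_zero] at htn
        exact htn.resolve_left (Nat.factorial_ne_zero n)
      rw [setLIntegral_measure_zero _ _ this]
      simp
    set c : ℝ := ((n : ℝ) + 1) ^ k / t with hc
    have hN : (1:ℝ) ≤ ((n : ℝ) + 1) ^ k := one_le_pow₀ (by linarith [n.cast_nonneg (α := ℝ)])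
    have hcpos : 0 < c := by positivity
    have hc1 : 1 ≤ c := by
      rw [hc, le_div_iff₀ hpos]; linarith
    have hlogc : Real.log c = k * Real.log (n + 1) - Real.log t := by
      rw [hc, Real.log_div (by positivity) hpos.ne', Real.log_pow]
    have hpt : ∀ x, F x + 1 ≤ ENNReal.ofReal c⁻¹ * ∏ i, ENNReal.ofReal (G (x i)) +
        ENNReal.ofReal (Real.log c) := by
      intro x
      have hp : 0 < ∏ i, G (x i) := Finset.prod_pos fun i _ => hGpos _
      have hp1 : 0 ≤ Real.log (∏ i, G (x i)) := by
        rw [Real.log_prod fun i _ => (hGpos _).ne']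
        exact Finset.sum_nonneg fun i _ => Real.log_nonneg (h.hG1 _)
      rw [hFeq, ← ENNReal.ofReal_prod_of_nonneg fun i _ => (hGpos _).le, ← ENNReal.ofReal_one,
        ← ENNReal.ofReal_add hp1 zero_le_one, ← ENNReal.ofReal_mul (by positivity),
        ← ENNReal.ofReal_add (by positivity) (Real.log_nonneg hc1)]
      apply ENNReal.ofReal_le_ofReal
      have := log_le_aux hp hcpos
      rw [div_eq_inv_mul] at this
      exact this
    have hint : (n.factorial : ENNReal) * ∫⁻ x in patSet f π, F x ∂(cube n) + ENNReal.ofReal t ≤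
        ENNReal.ofReal (t * Real.log c) + ENNReal.ofReal t := by
      have hGm : Measurable fun x : Fin n → ℝ => ∏ i, ENNReal.ofReal (G (x i)) :=
        Finset.measurable_fun_prod _ fun i _ => h.hG.ennreal_ofReal.comp (measurable_pi_apply i)
      calc (n.factorial : ENNReal) * ∫⁻ x in patSet f π, F x ∂(cube n) + ENNReal.ofReal t
          = n.factorial * ∫⁻ x in patSet f π, (F x + 1) ∂(cube n) := by
            rw [lintegral_add_left hFm, ← htn, mul_add]; simp
        _ ≤ n.factorial * ∫⁻ x in patSet f π, (ENNReal.ofReal c⁻¹ * ∏ i, ENNReal.ofReal (G (x i)) +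
              ENNReal.ofReal (Real.log c)) ∂(cube n) := by
            exact mul_le_mul_right (lintegral_mono fun x => hpt x) _
        _ = ENNReal.ofReal c⁻¹ * (n.factorial * ∫⁻ x in patSet f π,
              ∏ i, ENNReal.ofReal (G (x i)) ∂(cube n)) +
              ENNReal.ofReal (Real.log c) * (n.factorial * cube n (patSet f π)) := by
            rw [lintegral_add_left (hGm.const_mul _), lintegral_const_mul _ hGm]
            simp only [lintegral_const, Measure.restrict_apply MeasurableSet.univ, Set.univ_inter]
            ring
        _ ≤ ENNReal.ofReal c⁻¹ * ((n + 1 : ℕ) : ENNReal) ^ k +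
              ENNReal.ofReal (Real.log c) * ENNReal.ofReal t := by
            rw [htn]
            gcongr
            exact h.lintegral_G_le π
        _ = ENNReal.ofReal (t * Real.log c) + ENNReal.ofReal t := by
            rw [add_comm, ← ENNReal.ofReal_mul (Real.log_nonneg hc1), mul_comm t]
            congr 1
            rw [← ENNReal.ofReal_natCast, ← ENNReal.ofReal_pow (by positivity),
              ← ENNReal.ofReal_mul (by positivity)]
            congr 1
            rw [hc]
            push_cast
            field_simp
    have h2 := (ENNReal.add_le_add_iff_right ENNReal.ofReal_ne_top).1 hint
    refine h2.trans (le_of_eq ?_)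
    congr 1
    rw [hlogc, Real.negMulLog]
    ring
  calc n * ∫⁻ t, ENNReal.ofReal (Real.log (G t)) ∂lam
      = ∫⁻ x, F x ∂(cube n) := (lintegral_cube_sum _ hlogm).symm
    _ = ∑ π : Equiv.Perm (Fin n), n.factorial * ∫⁻ x in patSet f π, F x ∂(cube n) := by
        refine (h.sum_lintegral F fun σ x => ?_).symm
        exact Equiv.sum_comp σ fun i => ENNReal.ofReal (Real.log (G (x i)))
    _ ≤ ∑ π : Equiv.Perm (Fin n), ENNReal.ofReal (Real.negMulLog (patternProb (graphPermuton f) π) +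
          patternProb (graphPermuton f) π * (k * Real.log (n + 1))) :=
        Finset.sum_le_sum fun π _ => key π
    _ = _ := by
        rw [← ENNReal.ofReal_sum_of_nonneg]
        · congr 1
          rw [Finset.sum_add_distrib, ← Finset.sum_mul, h.sum_patternProb, one_mul]
          rfl
        · intro π _
          have h1 := patternProb_nonneg' (graphPermuton f) π
          have h2 := Real.negMulLog_nonneg h1 (h.patternProb_le_one π)
          positivity

/-- The word of labels in the order of the values determines the pattern. -/
lemma Core.word_inj (h : Core f lab G Gd) {n : ℕ} {π π' : Equiv.Perm (Fin n)} {x x' : Fin n → ℝ}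
    (hx : x ∈ patSet f π) (hx' : x' ∈ patSet f π') (hg : ∀ i, x i ∈ Gd) (hg' : ∀ i, x' i ∈ Gd)
    (hw : (fun j => lab (x (π.symm j))) = fun j => lab (x' (π'.symm j))) : π = π' := by
  have mono : ∀ z : Fin n → ℝ, StrictMono z → (∀ i, z i ∈ Gd) → Monotone fun i => lab (z i) := by
    intro z hz hgz i j hij
    rcases hij.eq_or_lt with rfl | hlt
    · exact le_rfl
    · exact h.hmono _ (hgz i) _ (hgz j) (hz hlt)
  have hm := mono x hx.1 hg
  have hm' := mono x' hx'.1 hg'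
  set τ : Equiv.Perm (Fin n) := π.trans π'.symm with hτ
  have hτa : ∀ i, π' (τ i) = π i := fun i => by simp [hτ]
  have hlab1 : ∀ i, lab (x i) = lab (x' (τ i)) := by
    intro i
    have := congrFun hw (π i)
    simpa [hτ] using this
  have hlab2 : (fun i => lab (x i)) = fun i => lab (x' i) := by
    have e : (fun i => lab (x i)) = (fun i => lab (x' i)) ∘ τ := funext hlab1
    have := Tuple.unique_monotone (f := fun i => lab (x' i)) (σ := τ) (τ := Equiv.refl _)
      (by rw [← e]; exact hm) hm'
    rw [e, this]; rfl
  have hlab3 : ∀ i, lab (x i) = lab (x' i) := congrFun hlab2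
  have hmain : StrictMono τ := by
    intro i j hij
    have hne : τ i ≠ τ j := fun e => hij.ne (τ.injective e)
    by_contra hcon
    have hlt : τ j < τ i := lt_of_le_of_ne (not_lt.1 hcon) hne.symm
    by_cases hl : lab (x i) = lab (x j)
    · have p1 := hx.2 i j hij
      have p2 := hx'.2 (τ j) (τ i) hlt
      simp only [hτa] at p2
      have mem_i : x i ∈ Gd ∩ lab ⁻¹' {lab (x i)} := ⟨hg i, rfl⟩
      have mem_j : x j ∈ Gd ∩ lab ⁻¹' {lab (x i)} := ⟨hg j, hl.symm⟩
      have mem_i' : x' (τ i) ∈ Gd ∩ lab ⁻¹' {lab (x i)} := ⟨hg' _, (hlab1 i).symm⟩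
      have mem_j' : x' (τ j) ∈ Gd ∩ lab ⁻¹' {lab (x i)} := ⟨hg' _, by simp [← hlab1 j, hl]⟩
      rcases h.hpiece (lab (x i)) with hp | hp
      · have q1 := p1.1 (hp mem_i mem_j (hx.1 hij))
        have q2 := p2.1 (hp mem_j' mem_i' (hx'.1 hlt))
        exact absurd q1 q2.le.not_gt
      · have q1 := (not_congr p1).1 (hp mem_i mem_j (hx.1 hij)).le.not_gt
        have q2 := (not_congr p2).1 (hp mem_j' mem_i' (hx'.1 hlt)).le.not_gt
        have : π i = π j := le_antisymm (not_lt.1 q2) (not_lt.1 q1)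
        exact hij.ne (π.injective this)
    · have hlt1 : lab (x i) < lab (x j) := lt_of_le_of_ne (hm hij.le) hl
      have := hm' hlt.le
      simp only at this
      rw [← hlab1 i, ← hlab1 j] at this
      exact absurd hlt1 this.not_gt
  have hτ1 : τ = Equiv.refl _ := (Equiv.Perm.monotone_iff τ).1 hmain.monotone
  ext i
  have := hτa i
  rw [hτ1] at this
  simp at this
  rw [this]

/-- The upper bound for the sampling entropy. -/
theorem Core.upper (h : Core f lab G Gd) (n m : ℕ) (bin : ℝ → Fin m) (hbin : Monotone bin)
    (hbm : Measurable bin) (ρ : Fin m → Fin k → ℝ) (hρ : ∀ b a, 0 < ρ b a)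
    (hρ1 : ∀ b, ∑ a, ρ b a ≤ 1) :
    ENNReal.ofReal (samplingEntropy (graphPermuton f) n) ≤
      n * ∫⁻ t, ENNReal.ofReal (-Real.log (ρ (bin (f t)) (lab t))) ∂lam +
        ENNReal.ofReal (m * Real.log (n + 1)) := by
  classical
  have hρle : ∀ b a, ρ b a ≤ 1 := fun b a =>
    (Finset.single_le_sum (f := fun a => ρ b a) (fun a _ => (hρ b a).le) (Finset.mem_univ a)).trans
      (hρ1 b)
  have hlogm : Measurable fun t => ENNReal.ofReal (-Real.log (ρ (bin (f t)) (lab t))) := by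
    have : Measurable fun p : Fin m × Fin k => ENNReal.ofReal (-Real.log (ρ p.1 p.2)) :=
      measurable_of_finite _
    exact this.comp ((hbm.comp h.hf).prodMk h.hlab)
  set F : (Fin n → ℝ) → ENNReal :=
    fun x => ∑ i, ENNReal.ofReal (-Real.log (ρ (bin (f (x i))) (lab (x i)))) with hF
  have hFm : Measurable F := Finset.measurable_fun_sum _ fun i _ => hlogm.comp (measurable_pi_apply i)
  have hFeq : ∀ x, F x = ENNReal.ofReal (-Real.log (∏ i, ρ (bin (f (x i))) (lab (x i)))) := by
    intro x
    rw [Real.log_prod fun i _ => (hρ _ _).ne', ← Finset.sum_neg_distrib,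
      ENNReal.ofReal_sum_of_nonneg fun i _ =>
        neg_nonneg.2 (Real.log_nonpos (hρ _ _).le (hρle _ _))]
  set C : ℝ := ((n : ℝ) + 1) ^ m with hC
  have hC1 : 1 ≤ C := one_le_pow₀ (by linarith [n.cast_nonneg (α := ℝ)])
  have hCpos : 0 < C := zero_lt_one.trans_le hC1
  set W : Equiv.Perm (Fin n) → Finset (Fin n → Fin k) := fun π =>
    Finset.univ.filter fun w => ∃ x ∈ patSet f π, (∀ i, x i ∈ Gd) ∧
      w = fun j => lab (x (π.symm j)) with hW
  set M : Finset (Fin n → Fin m) := Finset.univ.filter fun c => Monotone c with hM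
  set Q : Equiv.Perm (Fin n) → ℝ := fun π => ∑ w ∈ W π, ∑ c ∈ M, ∏ j, ρ (c j) (w j) with hQ
  have hterm : ∀ (c : Fin n → Fin m) (w : Fin n → Fin k), 0 < ∏ j, ρ (c j) (w j) := fun c w =>
    Finset.prod_pos fun j _ => hρ _ _
  have hQ0 : ∀ π, 0 ≤ Q π := fun π =>
    Finset.sum_nonneg fun w _ => Finset.sum_nonneg fun c _ => (hterm c w).le
  have hQsum : ∑ π, Q π ≤ C := by
    calc ∑ π, Q π = ∑ w ∈ Finset.univ.biUnion W, ∑ c ∈ M, ∏ j, ρ (c j) (w j) := by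
          rw [Finset.sum_biUnion]
          intro π _ π' _ hne
          rw [Function.onFun, Finset.disjoint_left]
          intro w hw hw'
          simp only [hW, Finset.mem_filter, Finset.mem_univ, true_and] at hw hw'
          obtain ⟨x, hx, hg, he⟩ := hw
          obtain ⟨x', hx', hg', he'⟩ := hw'
          exact hne (h.word_inj hx hx' hg hg' (he.symm.trans he'))
      _ ≤ ∑ w : Fin n → Fin k, ∑ c ∈ M, ∏ j, ρ (c j) (w j) :=
          Finset.sum_le_sum_of_subset_of_nonneg (Finset.subset_univ _)
            fun w _ _ => Finset.sum_nonneg fun c _ => (hterm c w).le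
      _ = ∑ c ∈ M, ∏ j, ∑ a, ρ (c j) a := by
          rw [Finset.sum_comm]
          refine Finset.sum_congr rfl fun c _ => ?_
          rw [Finset.prod_univ_sum]
          simp
      _ ≤ ∑ c ∈ M, 1 := Finset.sum_le_sum fun c _ =>
          Finset.prod_le_one (fun j _ => Finset.sum_nonneg fun a _ => (hρ _ a).le) fun j _ => hρ1 _
      _ = (M.card : ℝ) := by simp
      _ ≤ C := by
          have : M.card ≤ (n + 1) ^ m := by
            have := card_monotone_le n m
            convert this
          rw [hC]
          exact_mod_cast this
  have hrQ : ∀ π, ∀ x ∈ patSet f π, (∀ i, x i ∈ Gd) → (Function.Injective fun i => f (x i)) →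
      ∏ i, ρ (bin (f (x i))) (lab (x i)) ≤ Q π := by
    intro π x hx hg hinj
    have hmon := (mem_pat_iff π hinj).1 hx.2
    have hc : (fun j => bin (f (x (π.symm j)))) ∈ M :=
      Finset.mem_filter.2 ⟨Finset.mem_univ _, hbin.comp hmon.monotone⟩
    have hw : (fun j => lab (x (π.symm j))) ∈ W π :=
      Finset.mem_filter.2 ⟨Finset.mem_univ _, x, hx, hg, rfl⟩
    calc ∏ i, ρ (bin (f (x i))) (lab (x i))
        = ∏ j, ρ (bin (f (x (π.symm j)))) (lab (x (π.symm j))) :=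
          (Equiv.prod_comp π.symm fun i => ρ (bin (f (x i))) (lab (x i))).symm
      _ ≤ ∑ c ∈ M, ∏ j, ρ (c j) (lab (x (π.symm j))) :=
          Finset.single_le_sum
            (f := fun c : Fin n → Fin m => ∏ j, ρ (c j) (lab (x (π.symm j))))
            (fun c _ => (hterm c _).le) hc
      _ ≤ Q π :=
          Finset.single_le_sum (f := fun w : Fin n → Fin k => ∑ c ∈ M, ∏ j, ρ (c j) (w j))
            (fun w _ => Finset.sum_nonneg fun c _ => (hterm c w).le) hw
  have key : ∀ π : Equiv.Perm (Fin n),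
      ENNReal.ofReal (Real.negMulLog (patternProb (graphPermuton f) π)) +
        ENNReal.ofReal (patternProb (graphPermuton f) π) ≤
      n.factorial * ∫⁻ x in patSet f π, F x ∂(cube n) +
        ENNReal.ofReal (Real.log C) * ENNReal.ofReal (patternProb (graphPermuton f) π) +
        ENNReal.ofReal (Q π / C) := by
    intro π
    set t := patternProb (graphPermuton f) π with ht
    have htn : (n.factorial : ENNReal) * cube n (patSet f π) = ENNReal.ofReal t :=
      (ofReal_patternProb h.hf π).symm
    have ht0 : 0 ≤ t := patternProb_nonneg' _ _
    have ht1 : t ≤ 1 := h.patternProb_le_one π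
    rcases ht0.eq_or_lt with h0 | hpos
    · simp [← h0]
    have hae : ∀ᵐ x ∂(cube n), x ∈ patSet f π → ∏ i, ρ (bin (f (x i))) (lab (x i)) ≤ Q π := by
      filter_upwards [h.ae_good n, h.ae_inj n] with x h1 h2 h3 using hrQ π x h3 h1 h2
    have hQpos : 0 < Q π := by
      by_contra hcon
      have : ∀ᵐ x ∂(cube n), x ∉ patSet f π := by
        filter_upwards [hae] with x hx hmem
        exact hcon (lt_of_lt_of_le (hterm _ _) (hx hmem))
      have hz : cube n (patSet f π) = 0 := measure_eq_zero_iff_ae_notMem.2 this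
      rw [hz, mul_zero] at htn
      have := ENNReal.ofReal_eq_zero.1 htn.symm
      linarith
    have hreal : Real.negMulLog t + t ≤ t * (-Real.log (Q π / C)) + Q π / C := by
      have h1 := log_le_aux (div_pos hQpos hCpos) hpos
      have h2 := mul_le_mul_of_nonneg_left h1 hpos.le
      have h3 : t * (Q π / C / t) = Q π / C := by field_simp
      rw [mul_add, mul_add, h3] at h2
      rw [Real.negMulLog]
      linarith
    have hint : ENNReal.ofReal (-Real.log (Q π / C)) * ENNReal.ofReal t ≤
        n.factorial * ∫⁻ x in patSet f π, F x ∂(cube n) +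
          ENNReal.ofReal (Real.log C) * ENNReal.ofReal t := by
      calc ENNReal.ofReal (-Real.log (Q π / C)) * ENNReal.ofReal t
          = n.factorial * ∫⁻ x in patSet f π, ENNReal.ofReal (-Real.log (Q π / C)) ∂(cube n) := by
            rw [← htn]
            simp only [lintegral_const, Measure.restrict_apply MeasurableSet.univ, Set.univ_inter]
            ring
        _ ≤ n.factorial * ∫⁻ x in patSet f π, (F x + ENNReal.ofReal (Real.log C)) ∂(cube n) := by
            refine mul_le_mul_right (setLIntegral_mono_ae' (measurableSet_patSet h.hf π) ?_) _
            filter_upwards [hae] with x hx hmem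
            rw [hFeq]
            refine le_trans (ENNReal.ofReal_le_ofReal ?_) ENNReal.ofReal_add_le
            have hp : 0 < ∏ i, ρ (bin (f (x i))) (lab (x i)) := Finset.prod_pos fun i _ => hρ _ _
            rw [Real.log_div hQpos.ne' hCpos.ne']
            have := Real.log_le_log hp (hx hmem)
            linarith
        _ = _ := by
            rw [lintegral_add_left hFm, mul_add]
            simp only [lintegral_const, Measure.restrict_apply MeasurableSet.univ, Set.univ_inter]
            rw [← htn]
            ring
    rw [← ENNReal.ofReal_add (Real.negMulLog_nonneg ht0 ht1) ht0]
    calc ENNReal.ofReal (Real.negMulLog t + t)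
        ≤ ENNReal.ofReal (t * (-Real.log (Q π / C)) + Q π / C) := ENNReal.ofReal_le_ofReal hreal
      _ ≤ ENNReal.ofReal (t * (-Real.log (Q π / C))) + ENNReal.ofReal (Q π / C) :=
          ENNReal.ofReal_add_le
      _ = ENNReal.ofReal (-Real.log (Q π / C)) * ENNReal.ofReal t + ENNReal.ofReal (Q π / C) := by
          rw [ENNReal.ofReal_mul ht0, mul_comm]
      _ ≤ _ := by gcongr
  have hsum := Finset.sum_le_sum fun π (_ : π ∈ (Finset.univ : Finset (Equiv.Perm (Fin n)))) => key π
  rw [Finset.sum_add_distrib, Finset.sum_add_distrib, Finset.sum_add_distrib, ← Finset.mul_sum,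
    ← Finset.mul_sum, h.sum_ofReal_patternProb, Finset.mul_sum, h.sum_lintegral F, mul_one,
    lintegral_cube_sum _ hlogm,
    ← ENNReal.ofReal_sum_of_nonneg (fun π _ => div_nonneg (hQ0 π) hCpos.le),
    ← ENNReal.ofReal_sum_of_nonneg (fun π _ => Real.negMulLog_nonneg (patternProb_nonneg' _ _)
      (h.patternProb_le_one π)), ← Finset.sum_div] at hsum
  · have h1 : ENNReal.ofReal ((∑ π, Q π) / C) ≤ 1 := by
      rw [ENNReal.ofReal_le_one, div_le_one hCpos]; exact hQsum
    have h2 := hsum.trans (add_le_add_right h1 _)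
    have h3 := (ENNReal.add_le_add_iff_right ENNReal.one_ne_top).1 h2
    have h4 : Real.log C = m * Real.log (n + 1) := by rw [hC, Real.log_pow]
    rw [h4] at h3
    exact h3
  · intro σ x
    exact Equiv.sum_comp σ fun i => ENNReal.ofReal (-Real.log (ρ (bin (f (x i))) (lab (x i))))

end

end PermEnt
namespace PermEnt

open Set

lemma lam_le_volume (s : Set ℝ) : lam s ≤ volume s := Measure.restrict_le_self s

lemma one_le_abs_deriv {f : ℝ → ℝ} (hf : Measurable f) (hmp : Measure.map f lam = lam)
    {a b t d : ℝ} (hsub : Ioo a b ⊆ Icc 0 1) (ht : t ∈ Ioo a b) (hd : HasDerivAt f d t) :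
    1 ≤ |d| := by
  by_contra hcon
  push Not at hcon
  obtain ⟨c, hc1, hc2⟩ := exists_between hcon
  have hc0 : 0 < c := (abs_nonneg d).trans_lt hc1
  have h1 : ∀ᶠ s in nhds t, |f s - f t| ≤ c * |s - t| := by
    have h := hd.isLittleO.def (sub_pos.2 hc1)
    filter_upwards [h] with s hs
    simp only [Real.norm_eq_abs, smul_eq_mul] at hs
    have e : f s - f t = (f s - f t - (s - t) * d) + (s - t) * d := by ring
    rw [e]
    refine (abs_add_le _ _).trans ?_
    rw [abs_mul]
    nlinarith [abs_nonneg (s - t)]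
  have h2 : ∀ᶠ s in nhds t, s ∈ Ioo a b := isOpen_Ioo.mem_nhds ht
  obtain ⟨η, hη, hball⟩ := Metric.eventually_nhds_iff_ball.1 (h1.and h2)
  have hs1 : Metric.ball t η ⊆ f ⁻¹' (Metric.closedBall (f t) (c * η)) := by
    intro s hs
    have := (hball s hs).1
    rw [mem_preimage, Metric.mem_closedBall, Real.dist_eq]
    rw [Metric.mem_ball, Real.dist_eq] at hs
    exact this.trans (by gcongr)
  have hs2 : Metric.ball t η ⊆ Icc 0 1 := fun s hs => hsub (hball s hs).2
  have h3 : volume (Metric.ball t η) ≤ volume (Metric.closedBall (f t) (c * η)) := by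
    calc volume (Metric.ball t η) = lam (Metric.ball t η) := by
          rw [lam, Measure.restrict_apply Metric.isOpen_ball.measurableSet,
            inter_eq_self_of_subset_left hs2]
      _ ≤ lam (f ⁻¹' (Metric.closedBall (f t) (c * η))) := measure_mono hs1
      _ = lam (Metric.closedBall (f t) (c * η)) := by
          rw [← Measure.map_apply hf Metric.isClosed_closedBall.measurableSet, hmp]
      _ ≤ _ := lam_le_volume _
  rw [Real.volume_ball, Real.volume_closedBall] at h3
  have := (ENNReal.ofReal_le_ofReal_iff (by positivity)).1 h3
  nlinarith

lemma mono_or_anti {f g : ℝ → ℝ} {a b : ℝ} (hd : ∀ t ∈ Ioo a b, HasDerivAt f (g t) t)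
    (hg : ∀ t ∈ Ioo a b, 1 ≤ |g t|) :
    StrictMonoOn f (Ioo a b) ∨ StrictAntiOn f (Ioo a b) := by
  have hc : ContinuousOn f (Ioo a b) := fun t ht => (hd t ht).continuousAt.continuousWithinAt
  rcases hasDerivWithinAt_forall_lt_or_forall_gt_of_forall_ne (convex_Ioo a b)
    (fun t ht => (hd t ht).hasDerivWithinAt) (m := 0) (fun t ht h0 => by
      have := hg t ht; rw [h0] at this; norm_num at this) with h | h
  · right
    refine strictAntiOn_of_deriv_neg (convex_Ioo a b) hc fun t ht => ?_
    rw [interior_Ioo] at ht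
    rw [(hd t ht).deriv]; exact h t ht
  · left
    refine strictMonoOn_of_deriv_pos (convex_Ioo a b) hc fun t ht => ?_
    rw [interior_Ioo] at ht
    rw [(hd t ht).deriv]; exact h t ht

lemma lintegral_abs_deriv {f g : ℝ → ℝ} {s : Set ℝ} (hs : MeasurableSet s)
    (hd : ∀ t ∈ s, HasDerivAt f (g t) t) (hinj : InjOn f s) :
    ∫⁻ t in s, ENNReal.ofReal |g t| = volume (f '' s) := by
  have := lintegral_image_eq_lintegral_abs_deriv_mul hs
    (fun t ht => (hd t ht).hasDerivWithinAt) hinj (fun _ => 1)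
  simpa using this.symm

/-- The cell of `y` in the partition of the unit interval into `M + 1` cells of equal length. -/
noncomputable def bin (M : ℕ) (y : ℝ) : Fin (M + 1) :=
  ⟨min ⌊((M : ℝ) + 1) * y⌋₊ M, Nat.lt_succ_of_le (min_le_right _ _)⟩

lemma bin_mono (M : ℕ) : Monotone (bin M) := by
  intro y z h
  simp only [bin, Fin.mk_le_mk]
  gcongr

lemma bin_meas (M : ℕ) : Measurable (bin M) := by
  refine measurable_to_countable' fun b => ?_
  have : bin M ⁻¹' {b} = (fun y : ℝ => min ⌊((M : ℝ) + 1) * y⌋₊ M) ⁻¹' {(b : ℕ)} := by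
    ext y; simp [bin, Fin.ext_iff]
  rw [this]
  have hm : Measurable fun y : ℝ => min ⌊((M : ℝ) + 1) * y⌋₊ M :=
    (Nat.measurable_floor.comp (measurable_const.mul measurable_id)).min measurable_const
  exact hm (measurableSet_singleton _)

lemma bin_bounds (M : ℕ) {y : ℝ} (hy : y ∈ Icc (0:ℝ) 1) :
    (bin M y : ℝ) / (M + 1) ≤ y ∧ y ≤ ((bin M y : ℝ) + 1) / (M + 1) := by
  have hM : (0:ℝ) < (M : ℝ) + 1 := by positivity
  rw [div_le_iff₀ hM, le_div_iff₀ hM]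
  have h0 : 0 ≤ ((M : ℝ) + 1) * y := mul_nonneg hM.le hy.1
  have h1 := Nat.floor_le h0
  have h2 := Nat.lt_floor_add_one (((M : ℝ) + 1) * y)
  simp only [bin]
  rcases le_total ⌊((M : ℝ) + 1) * y⌋₊ M with h | h
  · rw [min_eq_left h]
    constructor <;> linarith
  · rw [min_eq_right h]
    have : (M : ℝ) ≤ ⌊((M : ℝ) + 1) * y⌋₊ := by exact_mod_cast h
    constructor
    · linarith
    · nlinarith [hy.2]

lemma bin_eq (M : ℕ) (b : Fin (M + 1)) {z : ℝ}
    (hz : z ∈ Ico ((b : ℝ) / (M + 1)) (((b : ℝ) + 1) / (M + 1))) : bin M z = b := by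
  have hM : (0:ℝ) < (M : ℝ) + 1 := by positivity
  obtain ⟨h1, h2⟩ := hz
  rw [div_le_iff₀ hM] at h1
  rw [lt_div_iff₀ hM] at h2
  have h0 : 0 ≤ ((M : ℝ) + 1) * z := by
    have : (0:ℝ) ≤ (b : ℝ) := Nat.cast_nonneg _
    linarith
  have : ⌊((M : ℝ) + 1) * z⌋₊ = b := by
    rw [Nat.floor_eq_iff h0]
    constructor <;> linarith
  ext
  simp only [bin, this]
  exact min_eq_left (Nat.lt_succ_iff.1 b.2)

lemma lam_bin_le (M : ℕ) (b : Fin (M + 1)) :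
    lam (bin M ⁻¹' {b}) ≤ ENNReal.ofReal (1 / ((M : ℝ) + 1)) := by
  rw [lam, Measure.restrict_apply (bin_meas M (measurableSet_singleton b))]
  calc _ ≤ volume (Icc ((b : ℝ) / (M + 1)) (((b : ℝ) + 1) / (M + 1))) := by
        refine measure_mono ?_
        rintro y ⟨h1, h2⟩
        have h1' : bin M y = b := h1
        have := bin_bounds M h2
        rw [h1'] at this
        exact this
    _ = _ := by
        rw [Real.volume_Icc]; congr 1; ring

/-- Local estimate: near `t`, the relative mass of a piece in a small cell is at least about
the reciprocal of the slope. -/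
lemma bin_lower {f g : ℝ → ℝ} (hf : Measurable f) (hmaps : MapsTo f (Icc (0:ℝ) 1) (Icc (0:ℝ) 1))
    {a b : ℝ} (hsub : Ioo a b ⊆ Icc 0 1)
    (hd : ∀ t ∈ Ioo a b, HasDerivAt f (g t) t) (hc : ContinuousOn g (Ioo a b))
    (hg : ∀ t ∈ Ioo a b, 1 ≤ |g t|) {t : ℝ} (ht : t ∈ Ioo a b) {L : ℝ} (hL : |g t| < L) :
    ∀ᶠ M : ℕ in atTop, ENNReal.ofReal (1 / ((M : ℝ) + 1)) ≤
      ENNReal.ofReal L * lam (f ⁻¹' (bin M ⁻¹' {bin M (f t)}) ∩ Ioo a b) := by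
  have hcat : ContinuousAt g t := hc.continuousAt (isOpen_Ioo.mem_nhds ht)
  have hev : ∀ᶠ s in nhds t, s ∈ Ioo a b ∧ |g s| < L :=
    (isOpen_Ioo.eventually_mem ht).and (hcat.abs.eventually_lt_const hL)
  obtain ⟨η, hη, hball⟩ := Metric.eventually_nhds_iff_ball.1 hev
  have hstrict : HasStrictDerivAt f (g t) t := by
    refine hasStrictDerivAt_of_hasDerivAt_of_continuousAt ?_ hcat
    filter_upwards [isOpen_Ioo.mem_nhds ht] with s hs using hd s hs
  have hne : g t ≠ 0 := by
    intro h0; have := hg t ht; rw [h0] at this; norm_num at this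
  have himg : f '' (Metric.ball t η) ∈ nhds (f t) := by
    rw [← hstrict.map_nhds_eq hne]
    exact image_mem_map (Metric.ball_mem_nhds t hη)
  obtain ⟨r, hr, hrsub⟩ := Metric.mem_nhds_iff.1 himg
  have hsmall : ∀ᶠ M : ℕ in atTop, 1 / ((M : ℝ) + 1) < r :=
    tendsto_one_div_add_atTop_nhds_zero_nat.eventually_lt_const hr
  filter_upwards [hsmall] with M hM
  set B : Set ℝ := Ico ((bin M (f t) : ℝ) / (M + 1)) (((bin M (f t) : ℝ) + 1) / (M + 1)) with hB
  have hlen : ((bin M (f t) : ℝ) + 1) / (M + 1) = (bin M (f t) : ℝ) / (M + 1) + 1 / ((M : ℝ) + 1) := by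
    ring
  have hbb := bin_bounds M (hmaps (hsub ht))
  have hBsub : B ⊆ Metric.ball (f t) r := by
    rintro y ⟨h1, h2⟩
    rw [Metric.mem_ball, Real.dist_eq, abs_lt]
    rw [hlen] at h2 hbb
    constructor <;> linarith [hbb.1, hbb.2]
  set E : Set ℝ := Metric.ball t η ∩ f ⁻¹' B with hE
  have hEm : MeasurableSet E := Metric.isOpen_ball.measurableSet.inter (hf measurableSet_Ico)
  have hEI : E ⊆ Ioo a b := fun s hs => (hball s hs.1).1
  have himage : B ⊆ f '' E := by
    intro y hy
    obtain ⟨s, hs, rfl⟩ := hrsub (hBsub hy)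
    exact ⟨s, ⟨hs, hy⟩, rfl⟩
  have hinj : InjOn f E := by
    rcases mono_or_anti hd hg with h | h
    · exact h.injOn.mono hEI
    · exact h.injOn.mono hEI
  calc ENNReal.ofReal (1 / ((M : ℝ) + 1)) = volume B := by
        rw [hB, Real.volume_Ico, hlen]; congr 1; ring
    _ ≤ volume (f '' E) := measure_mono himage
    _ = ∫⁻ s in E, ENNReal.ofReal |g s| :=
        (lintegral_abs_deriv hEm (fun s hs => hd s (hEI hs)) hinj).symm
    _ ≤ ∫⁻ s in E, ENNReal.ofReal L :=
        setLIntegral_mono' hEm fun s hs => ENNReal.ofReal_le_ofReal (hball s hs.1).2.le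
    _ = ENNReal.ofReal L * volume E := by simp
    _ ≤ ENNReal.ofReal L * lam (f ⁻¹' (bin M ⁻¹' {bin M (f t)}) ∩ Ioo a b) := by
        refine mul_le_mul_right ?_ _
        have : volume E = lam E := by
          rw [lam, Measure.restrict_apply hEm, inter_eq_self_of_subset_left (hEI.trans hsub)]
        rw [this]
        refine measure_mono fun s hs => ⟨?_, hEI hs⟩
        exact bin_eq M _ hs.2

end PermEnt

namespace PermEnt

open Set

/-- Relative mass of the piece `a` in the cell `b`. -/
noncomputable def pbar {k : ℕ} (f : ℝ → ℝ) (lab : ℝ → Fin k) (M : ℕ) (b : Fin (M + 1))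
    (a : Fin k) : ℝ :=
  ((M : ℝ) + 1) * (lam (f ⁻¹' (bin M ⁻¹' {b}) ∩ lab ⁻¹' {a})).toReal

lemma pbar_nonneg {k : ℕ} (f : ℝ → ℝ) (lab : ℝ → Fin k) (M : ℕ) (b : Fin (M + 1))
    (a : Fin k) : 0 ≤ pbar f lab M b a := by
  unfold pbar; positivity

lemma Core.sum_pbar_le {k : ℕ} {f : ℝ → ℝ} {lab : ℝ → Fin k} {G : ℝ → ℝ} {Gd : Set ℝ}
    (h : Core f lab G Gd) (M : ℕ) (b : Fin (M + 1)) : ∑ a, pbar f lab M b a ≤ 1 := by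
  have hM : (0:ℝ) < (M : ℝ) + 1 := by positivity
  have hBm : MeasurableSet (f ⁻¹' (bin M ⁻¹' {b})) := h.hf (bin_meas M (measurableSet_singleton b))
  have e : ∑ a, (lam (f ⁻¹' (bin M ⁻¹' {b}) ∩ lab ⁻¹' {a})).toReal
      = (lam (f ⁻¹' (bin M ⁻¹' {b}))).toReal := by
    rw [← ENNReal.toReal_sum (fun a _ => measure_ne_top _ _)]
    congr 1
    rw [← measure_biUnion_finset]
    · congr 1
      ext t; simp
    · intro a _ c _ hac
      refine Set.disjoint_left.2 ?_
      rintro t ⟨_, h1⟩ ⟨_, h2⟩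
      exact hac (h1.symm.trans h2)
    · intro a _
      exact hBm.inter (h.hlab (measurableSet_singleton a))
  unfold pbar
  rw [← Finset.mul_sum, e]
  have h1 : lam (f ⁻¹' (bin M ⁻¹' {b})) ≤ ENNReal.ofReal (1 / ((M : ℝ) + 1)) := by
    rw [← Measure.map_apply h.hf (bin_meas M (measurableSet_singleton b)), h.hmp]
    exact lam_bin_le M b
  have h2 := ENNReal.toReal_mono ENNReal.ofReal_ne_top h1
  rw [ENNReal.toReal_ofReal (by positivity)] at h2
  calc _ ≤ ((M : ℝ) + 1) * (1 / ((M : ℝ) + 1)) := by gcongr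
    _ = 1 := by field_simp

/-- Smoothed version of `pbar`. -/
noncomputable def rho {k : ℕ} (f : ℝ → ℝ) (lab : ℝ → Fin k) (ε : ℝ) (M : ℕ) (b : Fin (M + 1))
    (a : Fin k) : ℝ := (1 - ε) * pbar f lab M b a + ε / k

/-- Defect integrand. -/
noncomputable def defect {k : ℕ} (f : ℝ → ℝ) (lab : ℝ → Fin k) (G : ℝ → ℝ) (ε : ℝ) (M : ℕ)
    (t : ℝ) : ENNReal :=
  ENNReal.ofReal (-Real.log (rho f lab ε M (bin M (f t)) (lab t)) - Real.log (G t)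
    + Real.log (1 - ε))

lemma meas_fin2 {m k : ℕ} (r : Fin m → Fin k → ℝ) {u : ℝ → Fin m} {v : ℝ → Fin k}
    (hu : Measurable u) (hv : Measurable v) : Measurable fun t => r (u t) (v t) := by
  have h2 : Measurable fun q : Fin m × Fin k => r q.1 q.2 := measurable_of_finite _
  exact h2.comp (hu.prodMk hv)

lemma Core.meas_rho {k : ℕ} {f : ℝ → ℝ} {lab : ℝ → Fin k} {G : ℝ → ℝ} {Gd : Set ℝ}
    (h : Core f lab G Gd) (ε : ℝ) (M : ℕ) :
    Measurable fun t => rho f lab ε M (bin M (f t)) (lab t) :=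
  meas_fin2 (rho f lab ε M) ((bin_meas M).comp h.hf) h.hlab

lemma Core.meas_defect {k : ℕ} {f : ℝ → ℝ} {lab : ℝ → Fin k} {G : ℝ → ℝ} {Gd : Set ℝ}
    (h : Core f lab G Gd) (ε : ℝ) (M : ℕ) : Measurable (defect f lab G ε M) := by
  have h1 := h.meas_rho ε M
  have h2 := h.hG
  unfold defect
  exact ENNReal.measurable_ofReal.comp
    (((Real.measurable_log.comp h1).neg.sub (Real.measurable_log.comp h2)).add_const _)

lemma Core.defect_tendsto {k : ℕ} {f : ℝ → ℝ} {lab : ℝ → Fin k} {G : ℝ → ℝ} {Gd : Set ℝ}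
    (h : Core f lab G Gd) {ε : ℝ} (hε : 0 < ε) (hε1 : ε < 1)
    (hlow : ∀ t ∈ Gd, ∀ L, G t < L → ∀ᶠ M : ℕ in atTop, ENNReal.ofReal (1 / ((M : ℝ) + 1)) ≤
      ENNReal.ofReal L * lam (f ⁻¹' (bin M ⁻¹' {bin M (f t)}) ∩ lab ⁻¹' {lab t}))
    {t : ℝ} (ht : t ∈ Gd) :
    Tendsto (fun M => defect f lab G ε M t) atTop (nhds 0) := by
  have hG1 := h.hG1 t
  have hG0 : 0 < G t := by linarith
  rw [ENNReal.tendsto_nhds_zero]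
  intro e he
  obtain ⟨δ, hδ, hδe⟩ : ∃ δ : ℝ, 0 < δ ∧ ENNReal.ofReal δ ≤ e := by
    by_cases htop : e = ⊤
    · exact ⟨1, one_pos, htop ▸ le_top⟩
    · exact ⟨e.toReal, ENNReal.toReal_pos he.ne' htop, (ENNReal.ofReal_toReal htop).le⟩
  have hL : G t < G t * (1 + δ) := by nlinarith
  filter_upwards [hlow t ht _ hL] with M hM
  refine le_trans (ENNReal.ofReal_le_ofReal ?_) hδe
  set v := lam (f ⁻¹' (bin M ⁻¹' {bin M (f t)}) ∩ lab ⁻¹' {lab t}) with hv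
  have hMp : (0:ℝ) < (M : ℝ) + 1 := by positivity
  have hreal : 1 / ((M : ℝ) + 1) ≤ G t * (1 + δ) * v.toReal := by
    have := ENNReal.toReal_mono (ENNReal.mul_ne_top ENNReal.ofReal_ne_top (measure_ne_top _ _)) hM
    rwa [ENNReal.toReal_ofReal (by positivity), ENNReal.toReal_mul,
      ENNReal.toReal_ofReal (by positivity)] at this
  have hp : 1 ≤ G t * (1 + δ) * pbar f lab M (bin M (f t)) (lab t) := by
    unfold pbar
    rw [← hv]
    rw [div_le_iff₀ hMp] at hreal
    linarith
  set p := pbar f lab M (bin M (f t)) (lab t) with hpdef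
  have hLp : 0 < G t * (1 + δ) := by positivity
  have hp0 : 0 < p := by
    by_contra hc
    push Not at hc
    nlinarith
  have hk : (0:ℝ) ≤ ε / k := by positivity
  have hε2 : 0 < 1 - ε := by linarith
  have h1 : Real.log ((1 - ε) * p) ≤ Real.log (rho f lab ε M (bin M (f t)) (lab t)) := by
    apply Real.log_le_log (by positivity)
    unfold rho; rw [← hpdef]; linarith
  rw [Real.log_mul hε2.ne' hp0.ne'] at h1
  have h2 : 0 ≤ Real.log (G t * (1 + δ) * p) := Real.log_nonneg hp
  have hδ1 : (0:ℝ) < 1 + δ := by linarith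
  rw [Real.log_mul hLp.ne' hp0.ne', Real.log_mul hG0.ne' hδ1.ne'] at h2
  have h3 := Real.log_le_sub_one_of_pos hδ1
  linarith

lemma Core.lintegral_defect_tendsto {k : ℕ} {f : ℝ → ℝ} {lab : ℝ → Fin k} {G : ℝ → ℝ} {Gd : Set ℝ}
    (h : Core f lab G Gd) {ε : ℝ} (hε : 0 < ε) (hε1 : ε < 1)
    (hlow : ∀ t ∈ Gd, ∀ L, G t < L → ∀ᶠ M : ℕ in atTop, ENNReal.ofReal (1 / ((M : ℝ) + 1)) ≤
      ENNReal.ofReal L * lam (f ⁻¹' (bin M ⁻¹' {bin M (f t)}) ∩ lab ⁻¹' {lab t})) :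
    Tendsto (fun M => ∫⁻ t, defect f lab G ε M t ∂lam) atTop (nhds 0) := by
  have := tendsto_lintegral_of_dominated_convergence (μ := lam)
    (F := fun M => defect f lab G ε M) (f := fun _ => 0)
    (fun _ => ENNReal.ofReal (-Real.log (ε / k))) (fun M => h.meas_defect ε M)
    (fun M => ?_) (by simp) ?_
  · simpa using this
  · refine Eventually.of_forall fun t => ENNReal.ofReal_le_ofReal ?_
    have hk : 0 < (k : ℝ) := by exact_mod_cast Fin.pos (lab t)
    have hp := pbar_nonneg f lab M (bin M (f t)) (lab t)
    have h1 : Real.log (ε / k) ≤ Real.log (rho f lab ε M (bin M (f t)) (lab t)) := by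
      apply Real.log_le_log (by positivity)
      unfold rho
      have : 0 ≤ (1 - ε) * pbar f lab M (bin M (f t)) (lab t) := mul_nonneg (by linarith) hp
      linarith
    have h2 := Real.log_nonneg (h.hG1 t)
    have h3 : Real.log (1 - ε) ≤ 0 := Real.log_nonpos (by linarith) (by linarith)
    linarith
  · filter_upwards [h.hae] with t ht using h.defect_tendsto hε hε1 hlow ht

lemma log_div_tendsto (c : ℝ) :
    Tendsto (fun n : ℕ => ENNReal.ofReal (c * Real.log (n + 1)) / n) atTop (nhds 0) := by
  have h1 : Tendsto (fun n : ℕ => Real.log (n + 1) / n) atTop (nhds 0) := by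
    have h2 : Tendsto (fun x : ℝ => Real.log x / (1 * x + (-1))) atTop (nhds 0) := by
      simpa using Real.tendsto_pow_log_div_mul_add_atTop 1 (-1) 1 one_ne_zero
    have h3 : Tendsto (fun n : ℕ => (n : ℝ) + 1) atTop atTop :=
      tendsto_atTop_add_const_right _ _ tendsto_natCast_atTop_atTop
    refine (h2.comp h3).congr fun n => ?_
    simp
  have h4 : Tendsto (fun n : ℕ => ENNReal.ofReal (c * (Real.log (n + 1) / n))) atTop (nhds 0) := by
    have := ENNReal.tendsto_ofReal (h1.const_mul c)
    simpa using this
  refine h4.congr' ?_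
  filter_upwards [eventually_gt_atTop 0] with n hn
  have hn' : (0:ℝ) < n := by exact_mod_cast hn
  rw [← mul_div_assoc, ENNReal.ofReal_div_of_pos hn', ENNReal.ofReal_natCast]

lemma Core.limsup_le {k : ℕ} {f : ℝ → ℝ} {lab : ℝ → Fin k} {G : ℝ → ℝ} {Gd : Set ℝ}
    (h : Core f lab G Gd)
    (hlow : ∀ t ∈ Gd, ∀ L, G t < L → ∀ᶠ M : ℕ in atTop, ENNReal.ofReal (1 / ((M : ℝ) + 1)) ≤
      ENNReal.ofReal L * lam (f ⁻¹' (bin M ⁻¹' {bin M (f t)}) ∩ lab ⁻¹' {lab t})) :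
    limsup (fun n : ℕ => ENNReal.ofReal (samplingEntropy (graphPermuton f) n / n)) atTop ≤
      ∫⁻ t, ENNReal.ofReal (Real.log (G t)) ∂lam := by
  have hk : 0 < (k : ℝ) := by exact_mod_cast Fin.pos (lab 0)
  set I := ∫⁻ t, ENNReal.ofReal (Real.log (G t)) ∂lam with hI
  set S := limsup (fun n : ℕ => ENNReal.ofReal (samplingEntropy (graphPermuton f) n / n)) atTop
    with hS
  have key : ∀ ε : ℝ, 0 < ε → ε < 1 → S ≤ I + ENNReal.ofReal (-Real.log (1 - ε)) := by
    intro ε hε hε1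
    have hbound : ∀ M : ℕ, S ≤ (∫⁻ t, defect f lab G ε M t ∂lam) +
        (I + ENNReal.ofReal (-Real.log (1 - ε))) := by
      intro M
      set J := ∫⁻ t, ENNReal.ofReal (-Real.log (rho f lab ε M (bin M (f t)) (lab t))) ∂lam with hJ
      have hJle : J ≤ (∫⁻ t, defect f lab G ε M t ∂lam) +
          (I + ENNReal.ofReal (-Real.log (1 - ε))) := by
        have e1 : ENNReal.ofReal (-Real.log (1 - ε)) =
            ∫⁻ _t, ENNReal.ofReal (-Real.log (1 - ε)) ∂lam := by simp
        rw [e1, hI, ← lintegral_add_right _ measurable_const,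
          ← lintegral_add_left (h.meas_defect ε M)]
        refine lintegral_mono fun t => ?_
        calc _ = ENNReal.ofReal ((-Real.log (rho f lab ε M (bin M (f t)) (lab t)) - Real.log (G t)
                + Real.log (1 - ε)) + (Real.log (G t) + -Real.log (1 - ε))) := by
              congr 1; ring
          _ ≤ _ := (ENNReal.ofReal_add_le).trans
              (add_le_add le_rfl ENNReal.ofReal_add_le)
      refine le_trans ?_ hJle
      have hup := fun n => h.upper n (M + 1) (bin M) (bin_mono M) (bin_meas M) (rho f lab ε M)
        (fun b a => by
          unfold rho
          have := mul_nonneg (by linarith : 0 ≤ 1 - ε) (pbar_nonneg f lab M b a)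
          have : 0 < ε / k := by positivity
          linarith)
        (fun b => by
          unfold rho
          rw [Finset.sum_add_distrib, ← Finset.mul_sum]
          have := h.sum_pbar_le M b
          have e : ∑ _a : Fin k, ε / (k : ℝ) = ε := by
            simp; field_simp
          rw [e]
          nlinarith)
      have hn : ∀ᶠ n : ℕ in atTop, ENNReal.ofReal (samplingEntropy (graphPermuton f) n / n) ≤
          J + ENNReal.ofReal (((M + 1 : ℕ) : ℝ) * Real.log (n + 1)) / n := by
        filter_upwards [eventually_gt_atTop 0] with n hn
        have hn' : (0:ℝ) < n := by exact_mod_cast hn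
        have hn0 : (n : ENNReal) ≠ 0 := by exact_mod_cast hn.ne'
        rw [ENNReal.ofReal_div_of_pos hn', ENNReal.ofReal_natCast]
        calc _ ≤ (n * J + ENNReal.ofReal (((M + 1 : ℕ) : ℝ) * Real.log (n + 1))) / n :=
              ENNReal.div_le_div_right (hup n) _
          _ = _ := by
              rw [ENNReal.add_div, mul_comm, ENNReal.mul_div_cancel_right hn0
                (ENNReal.natCast_ne_top n)]
      have hlim : Tendsto (fun n : ℕ => J + ENNReal.ofReal (((M + 1 : ℕ) : ℝ) * Real.log (n + 1)) / n)
          atTop (nhds (J + 0)) := tendsto_const_nhds.add (log_div_tendsto _)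
      calc S ≤ _ := limsup_le_limsup hn
        _ = J := by rw [hlim.limsup_eq, add_zero]
    have hl := (h.lintegral_defect_tendsto hε hε1 hlow).add
      (tendsto_const_nhds (x := I + ENNReal.ofReal (-Real.log (1 - ε))))
    rw [zero_add] at hl
    exact ge_of_tendsto' hl hbound
  have hc : Tendsto (fun ε : ℝ => I + ENNReal.ofReal (-Real.log (1 - ε))) (nhdsWithin 0 (Ioi 0))
      (nhds (I + 0)) := by
    refine tendsto_const_nhds.add ?_
    have hca : ContinuousAt (fun ε : ℝ => -Real.log (1 - ε)) 0 := by
      refine ContinuousAt.neg (ContinuousAt.log (by fun_prop) (by norm_num))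
    have := ENNReal.tendsto_ofReal (hca.tendsto.mono_left (nhdsWithin_le_nhds (s := Ioi 0)))
    simpa using this
  rw [add_zero] at hc
  refine ge_of_tendsto hc ?_
  filter_upwards [Ioo_mem_nhdsGT (zero_lt_one' ℝ)] with ε hε using key ε hε.1 hε.2

lemma Core.le_liminf {k : ℕ} {f : ℝ → ℝ} {lab : ℝ → Fin k} {G : ℝ → ℝ} {Gd : Set ℝ}
    (h : Core f lab G Gd) :
    ∫⁻ t, ENNReal.ofReal (Real.log (G t)) ∂lam ≤
    liminf (fun n : ℕ => ENNReal.ofReal (samplingEntropy (graphPermuton f) n / n)) atTop := by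
  set I := ∫⁻ t, ENNReal.ofReal (Real.log (G t)) ∂lam with hI
  have hn : ∀ᶠ n : ℕ in atTop, I - ENNReal.ofReal (k * Real.log (n + 1)) / n ≤
      ENNReal.ofReal (samplingEntropy (graphPermuton f) n / n) := by
    filter_upwards [eventually_gt_atTop 0] with n hn
    have hn' : (0:ℝ) < n := by exact_mod_cast hn
    have hn0 : (n : ENNReal) ≠ 0 := by exact_mod_cast hn.ne'
    rw [tsub_le_iff_right, ENNReal.ofReal_div_of_pos hn', ENNReal.ofReal_natCast,
      ← ENNReal.add_div, ENNReal.le_div_iff_mul_le (Or.inl hn0) (Or.inl (ENNReal.natCast_ne_top n)),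
      mul_comm]
    exact (h.lower n).trans ENNReal.ofReal_add_le
  have hlim : Tendsto (fun n : ℕ => I - ENNReal.ofReal (k * Real.log (n + 1)) / n)
      atTop (nhds (I - 0)) :=
    ENNReal.Tendsto.sub tendsto_const_nhds (log_div_tendsto _) (Or.inr ENNReal.zero_ne_top)
  calc I = liminf (fun n : ℕ => I - ENNReal.ofReal (k * Real.log (n + 1)) / n) atTop := by
        rw [hlim.liminf_eq, tsub_zero]
    _ ≤ _ := liminf_le_liminf hn

lemma Core.tendsto {k : ℕ} {f : ℝ → ℝ} {lab : ℝ → Fin k} {G : ℝ → ℝ} {Gd : Set ℝ}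
    (h : Core f lab G Gd)
    (hlow : ∀ t ∈ Gd, ∀ L, G t < L → ∀ᶠ M : ℕ in atTop, ENNReal.ofReal (1 / ((M : ℝ) + 1)) ≤
      ENNReal.ofReal L * lam (f ⁻¹' (bin M ⁻¹' {bin M (f t)}) ∩ lab ⁻¹' {lab t})) :
    Tendsto (fun n : ℕ => ENNReal.ofReal (samplingEntropy (graphPermuton f) n / n)) atTop
      (nhds (∫⁻ t, ENNReal.ofReal (Real.log (G t)) ∂lam)) :=
  tendsto_of_le_liminf_of_limsup_le h.le_liminf (h.limsup_le hlow)

end PermEnt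

namespace PermEnt

open Set

theorem main
    (f g : ℝ → ℝ) (hmeas : Measurable f)
    (hmaps : Set.MapsTo f (Set.Icc (0:ℝ) 1) (Set.Icc (0:ℝ) 1))
    (hmp : Measure.map f lam = lam)
    (k : ℕ) (x : Fin (k + 1) → ℝ) (hx0 : x 0 = 0) (hxk : x (Fin.last k) = 1)
    (hmono : StrictMono x)
    (hderiv : ∀ i : Fin k, ∀ t ∈ Set.Ioo (x i.castSucc) (x i.succ), HasDerivAt f (g t) t)
    (hcont : ∀ i : Fin k, ContinuousOn g (Set.Ioo (x i.castSucc) (x i.succ))) :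
    Tendsto (fun n : ℕ => ENNReal.ofReal (samplingEntropy (graphPermuton f) n / n)) atTop
      (nhds (∫⁻ t, ENNReal.ofReal (Real.log |g t|) ∂lam)) := by
  classical
  set I : Fin k → Set ℝ := fun i => Ioo (x i.castSucc) (x i.succ) with hIdef
  have hsub : ∀ i, I i ⊆ Icc 0 1 := by
    intro i t ht
    have h1 : x 0 ≤ x i.castSucc := hmono.monotone (Fin.zero_le _)
    have h2 : x i.succ ≤ x (Fin.last k) := hmono.monotone (Fin.le_last _)
    exact ⟨by linarith [ht.1], by linarith [ht.2]⟩
  have hord : ∀ i j s t, s ∈ I i → t ∈ I j → s ≤ t → i ≤ j := by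
    intro i j s t hs ht hst
    by_contra hc
    push Not at hc
    have h1 : j.succ ≤ i.castSucc := by
      rw [Fin.le_def]; simp; exact hc
    have h2 := hmono.monotone h1
    linarith [hs.1, ht.2]
  have huniq : ∀ i j t, t ∈ I i → t ∈ I j → i = j := fun i j t hi hj =>
    le_antisymm (hord i j t t hi hj le_rfl) (hord j i t t hj hi le_rfl)
  set Gd : Set ℝ := ⋃ i, I i with hGddef
  have hIo : ∀ i, IsOpen (I i) := fun i => isOpen_Ioo
  have hGdo : IsOpen Gd := isOpen_iUnion hIo
  have hk : 0 < k := by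
    rcases Nat.eq_zero_or_pos k with rfl | h
    · exfalso
      have : (0 : Fin 1) = Fin.last 0 := rfl
      rw [this, hxk] at hx0
      norm_num at hx0
    · exact h
  have hcover : ∀ t ∈ Icc (0:ℝ) 1, t ∉ range x → t ∈ Gd := by
    intro t ht hr
    have hne : ∀ j, x j ≠ t := fun j hj => hr ⟨j, hj⟩
    let F : Finset (Fin (k+1)) := Finset.univ.filter fun j => x j < t
    have h0 : (0 : Fin (k+1)) ∈ F := by
      simp only [F, Finset.mem_filter, Finset.mem_univ, true_and]
      exact lt_of_le_of_ne (by rw [hx0]; exact ht.1) (hne 0)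
    obtain ⟨j, hj, hjmax⟩ := F.exists_max_image id ⟨0, h0⟩
    have hjt : x j < t := by simpa [F] using hj
    have hjl : j ≠ Fin.last k := by
      rintro rfl
      rw [hxk] at hjt
      linarith [ht.2]
    obtain ⟨i, rfl⟩ := Fin.exists_castSucc_eq.2 hjl
    refine mem_iUnion.2 ⟨i, hjt, ?_⟩
    by_contra hc
    push Not at hc
    have : i.succ ∈ F := by
      simp only [F, Finset.mem_filter, Finset.mem_univ, true_and]
      exact lt_of_le_of_ne hc (hne _)
    have := hjmax _ this
    simp only [id] at this
    exact absurd this (not_le.2 (Fin.castSucc_lt_succ))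
  have hae : ∀ᵐ t ∂lam, t ∈ Gd := by
    have h1 : ∀ᵐ t ∂lam, t ∈ Icc (0:ℝ) 1 := ae_restrict_mem measurableSet_Icc
    have h2 : ∀ᵐ t ∂lam, t ∉ range x :=
      ae_restrict_of_ae ((finite_range x).countable.ae_notMem volume)
    filter_upwards [h1, h2] with t a b using hcover t a b
  let lab : ℝ → Fin k := fun t => if h : ∃ i, t ∈ I i then h.choose else ⟨0, hk⟩
  have hlabI : ∀ i t, t ∈ I i → lab t = i := by
    intro i t ht
    have h : ∃ i, t ∈ I i := ⟨i, ht⟩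
    simp only [lab, dif_pos h]
    exact huniq _ _ t h.choose_spec ht
  have hpre : ∀ i, Gd ∩ lab ⁻¹' {i} = I i := by
    intro i
    ext t
    constructor
    · rintro ⟨h1, h2⟩
      obtain ⟨j, hj⟩ := mem_iUnion.1 h1
      have h2' : lab t = i := h2
      rw [hlabI j t hj] at h2'
      exact h2' ▸ hj
    · intro ht
      exact ⟨mem_iUnion.2 ⟨i, ht⟩, hlabI i t ht⟩
  have hlabm : Measurable lab := by
    refine measurable_to_countable' fun i => ?_
    have e : lab ⁻¹' {i} = I i ∪ (Gdᶜ ∩ {_t | (⟨0, hk⟩ : Fin k) = i}) := by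
      rw [← hpre i]
      ext t
      by_cases ht : t ∈ Gd
      · simp [ht]
      · have hn : ¬ ∃ i, t ∈ I i := fun h => ht (mem_iUnion.2 h)
        have : lab t = ⟨0, hk⟩ := by simp only [lab, dif_neg hn]
        simp [ht, this]
    rw [e]
    exact (hIo i).measurableSet.union (hGdo.measurableSet.compl.inter (MeasurableSet.const _))
  have hg1 : ∀ i, ∀ t ∈ I i, 1 ≤ |g t| := fun i t ht =>
    one_le_abs_deriv hmeas hmp (hsub i) ht (hderiv i t ht)
  have hgGd : ContinuousOn g Gd := by
    intro t ht
    obtain ⟨i, hi⟩ := mem_iUnion.1 ht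
    exact ((hcont i).continuousAt ((hIo i).mem_nhds hi)).continuousWithinAt
  let G : ℝ → ℝ := Gd.piecewise (fun t => |g t|) (fun _ => 1)
  have hGeq : ∀ t ∈ Gd, G t = |g t| := fun t ht => piecewise_eq_of_mem _ _ _ ht
  have hGneq : ∀ t, t ∉ Gd → G t = 1 := fun t ht => by simp [G, ht]
  have hGm : Measurable G := by
    refine measurable_of_restrict_of_restrict_compl hGdo.measurableSet ?_ ?_
    · have : Gd.domRestrict G = Gd.domRestrict fun t => |g t| := by
        ext t; exact hGeq t t.2
      rw [this]
      exact (continuousOn_iff_continuous_domRestrict.1 hgGd.abs).measurable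
    · have : Gdᶜ.domRestrict G = fun _ => 1 := by
        ext t; exact hGneq t t.2
      rw [this]
      exact measurable_const
  have hinj : ∀ i, InjOn f (I i) := by
    intro i
    rcases mono_or_anti (hderiv i) (hg1 i) with h | h
    · exact h.injOn
    · exact h.injOn
  have core : Core f lab G Gd := by
    refine ⟨hmeas, hlabm, hGm, ?_, hGdo.measurableSet, hae, hmp, ?_, ?_, ?_⟩
    · intro t
      by_cases ht : t ∈ Gd
      · rw [hGeq t ht]
        obtain ⟨i, hi⟩ := mem_iUnion.1 ht
        exact hg1 i t hi
      · exact (hGneq t ht).ge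
    · intro s hs t ht hst
      obtain ⟨i, hi⟩ := mem_iUnion.1 hs
      obtain ⟨j, hj⟩ := mem_iUnion.1 ht
      rw [hlabI i s hi, hlabI j t hj]
      exact hord i j s t hi hj hst.le
    · intro i
      rw [hpre i]
      exact mono_or_anti (hderiv i) (hg1 i)
    · intro i
      rw [hpre i]
      refine Measure.le_iff.2 fun B hB => ?_
      have hB' : MeasurableSet (f ⁻¹' B) := hmeas hB
      have hm : MeasurableSet (f ⁻¹' B ∩ I i) := hB'.inter (hIo i).measurableSet
      rw [Measure.map_apply hmeas hB, withDensity_apply _ hB',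
        lintegral_indicator (hIo i).measurableSet, Measure.restrict_restrict (hIo i).measurableSet,
        lam, Measure.restrict_restrict ((hIo i).measurableSet.inter hB')]
      have e : I i ∩ f ⁻¹' B ∩ Icc 0 1 = f ⁻¹' B ∩ I i := by
        rw [inter_comm (I i), inter_assoc, inter_eq_self_of_subset_left (hsub i)]
      rw [e]
      calc _ = ∫⁻ t in f ⁻¹' B ∩ I i, ENNReal.ofReal |g t| := by
            refine setLIntegral_congr_fun hm fun t ht => ?_
            simp only [hGeq t (mem_iUnion.2 ⟨i, ht.2⟩)]
        _ = volume (f '' (f ⁻¹' B ∩ I i)) :=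
            lintegral_abs_deriv hm (fun t ht => hderiv i t ht.2)
              ((hinj i).mono inter_subset_right)
        _ ≤ volume (B ∩ Icc 0 1) := by
            refine measure_mono ?_
            rintro _ ⟨t, ht, rfl⟩
            exact ⟨ht.1, hmaps (hsub i ht.2)⟩
        _ = _ := (Measure.restrict_apply hB).symm
  have e : ∫⁻ t, ENNReal.ofReal (Real.log |g t|) ∂lam
      = ∫⁻ t, ENNReal.ofReal (Real.log (G t)) ∂lam := by
    refine lintegral_congr_ae ?_
    filter_upwards [hae] with t ht
    rw [hGeq t ht]
  rw [e]
  refine core.tendsto fun t ht L hL => ?_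
  rw [hGeq t ht] at hL
  obtain ⟨i, hi⟩ := mem_iUnion.1 ht
  filter_upwards [bin_lower hmeas hmaps (hsub i) (hderiv i) (hcont i) (hg1 i) hi hL] with M hM
  refine hM.trans (mul_le_mul_right (measure_mono ?_) _)
  rintro s ⟨h1, h2⟩
  refine ⟨h1, ?_⟩
  rw [mem_preimage, hlabI i t hi, hlabI i s h2]
  rfl

end PermEnt

/-- If f : [0,1] → [0,1] preserves Lebesgue measure and is piecewise continuously
differentiable with finitely many pieces (with derivative g on the open pieces), then
H_n(μ_f)/n → ∫₀¹ log |f'|, where the limit is taken in [0,∞] (value +∞ allowed). -/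
theorem samplingEntropy_div_tendsto_log_deriv_integral
    (f g : ℝ → ℝ) (hmeas : Measurable f)
    (hmaps : Set.MapsTo f (Set.Icc (0:ℝ) 1) (Set.Icc (0:ℝ) 1))
    (hmp : Measure.map f (volume.restrict (Set.Icc (0:ℝ) 1)) =
      volume.restrict (Set.Icc (0:ℝ) 1))
    (k : ℕ) (x : Fin (k + 1) → ℝ) (hx0 : x 0 = 0) (hxk : x (Fin.last k) = 1)
    (hmono : StrictMono x)
    (hderiv : ∀ i : Fin k, ∀ t ∈ Set.Ioo (x i.castSucc) (x i.succ), HasDerivAt f (g t) t)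
    (hcont : ∀ i : Fin k, ContinuousOn g (Set.Ioo (x i.castSucc) (x i.succ))) :
    Tendsto (fun n : ℕ => ENNReal.ofReal (samplingEntropy (graphPermuton f) n / n)) atTop
      (nhds (∫⁻ t in Set.Icc (0:ℝ) 1, ENNReal.ofReal (Real.log |g t|))) := by
  exact PermEnt.main f g hmeas hmaps hmp k x hx0 hxk hmono hderiv hcont
end
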